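/- arXiv:2310.09227 — 3 statements merged into one kernel-verified Lean document; each statement's English description precedes it below -/
import Mathlib

section
/- Let n, k be natural numbers with n ≥ 2k − 1. The ℤ-linear map from the free abelian group of integer-valued functions on the k-element subsets of {1,…,n} to the free abelian group of integer-valued functions on the standard subsets of size at most k, sending v to the function β ↦ Σ_{A a k-subset with β ⊆ A} v(A), is bijective. (Equivalently, the Bier matrix P_k is square and unimodular.) -/
/-!
The argument is an induction on `k` and, for fixed `k`, on `n ≥ 2k - 1`.

* Passing from `n ≥ 2k - 1` to `n + 1`, separate rows and columns according to whether they contain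
  `n + 1`. The Bier matrix becomes block triangular, and its diagonal blocks are the Bier matrices
  for `(n, k)` and `(n, k - 1)`.
* For `n = 2k - 1` no standard set has size `k`, so the columns are the same as for `k - 1`, and
  complementation matches the `k`-subsets with the `(k - 1)`-subsets. By inclusion-exclusion,
  complementing the rows amounts to composing with the involution
  `g ↦ (β ↦ ∑_{γ ⊆ β} (-1)^|γ| g γ)`, which makes sense because the standard sets are closed under
  taking subsets.
-/

open scoped Classical

/-- A finset `β = {b₁ < b₂ < … < b_m}` of naturals is *standard* if `bᵢ ≥ 2i` for all `i`. -/
def IsStandard (β : Finset ℕ) : Prop :=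
  ∀ i < β.card, 2 * (i + 1) ≤ (β.sort (· ≤ ·)).getD i 0

/-- The `k`-element subsets of `{1,…,n}`. -/
def ksubsets (n k : ℕ) : Finset (Finset ℕ) :=
  (Finset.Icc 1 n).powerset.filter fun A => A.card = k

/-- The standard subsets of `{1,…,n}` of size at most `k`. -/
noncomputable def stdLe (n k : ℕ) : Finset (Finset ℕ) :=
  (Finset.Icc 1 n).powerset.filter fun β => IsStandard β ∧ β.card ≤ k

open Finset

section AlternatingSum

variable {α M : Type*} [AddCommGroup M] {β : Finset α} {a : α}

/-- The alternating sum of `g` over the subsets of `β`, with sign `(-1) ^ #γ` on `γ`. -/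
def alternatingSum (g : Finset α → M) (β : Finset α) : M :=
  ∑ γ ∈ β.powerset, (-1 : ℤ) ^ #γ • g γ

lemma alternatingSum_congr {f g : Finset α → M} (h : ∀ γ ⊆ β, f γ = g γ) :
    alternatingSum f β = alternatingSum g β :=
  sum_congr rfl fun γ hγ ↦ by rw [h γ (mem_powerset.1 hγ)]

lemma alternatingSum_insert [DecidableEq α] (g : Finset α → M) (ha : a ∉ β) :
    alternatingSum g (insert a β) =
      alternatingSum g β - alternatingSum (fun γ ↦ g (insert a γ)) β := by
  rw [alternatingSum, sum_powerset_insert ha, sub_eq_add_neg, alternatingSum, alternatingSum,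
    ← sum_neg_distrib]
  congr 1
  refine sum_congr rfl fun γ hγ ↦ ?_
  rw [card_insert_of_notMem (notMem_of_mem_powerset_of_notMem hγ ha), pow_succ, mul_neg_one,
    neg_smul]

lemma alternatingSum_sub (f g : Finset α → M) (β : Finset α) :
    alternatingSum (fun γ ↦ f γ - g γ) β = alternatingSum f β - alternatingSum g β := by
  simp only [alternatingSum, smul_sub, sum_sub_distrib]

lemma alternatingSum_alternatingSum (g : Finset α → M) (β : Finset α) :
    alternatingSum (alternatingSum g) β = g β := by
  classical
  induction β using Finset.induction_on generalizing g with
  | empty => simp [alternatingSum]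
  | insert a β ha ih =>
    have hinsert : ∀ γ ⊆ β, alternatingSum g (insert a γ) =
        alternatingSum g γ - alternatingSum (fun δ ↦ g (insert a δ)) γ :=
      fun γ hγ ↦ alternatingSum_insert g (notMem_mono hγ ha)
    rw [alternatingSum_insert _ ha, alternatingSum_congr hinsert, alternatingSum_sub, ih,
      ih (fun δ ↦ g (insert a δ)), sub_sub_cancel]

end AlternatingSum

section InclusionMatrix

variable {α M : Type*} [DecidableEq α] [AddCommGroup M] {𝒜 ℬ : Finset (Finset α)}
  {β N : Finset α} {a : α}

/-- The inclusion matrix of the family `𝒜` applied to `v`, evaluated at `β`: the sum of `v` over the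
members of `𝒜` containing `β`. The function `v` is defined on all finsets so that different families
can share it; only its values on `𝒜` matter. -/
def supersetSum (𝒜 : Finset (Finset α)) (v : Finset α → M) (β : Finset α) : M :=
  ∑ A ∈ 𝒜 with β ⊆ A, v A

variable (M) in
/-- The inclusion matrix with rows `𝒜` and columns `ℬ` acts bijectively on `M`-valued functions.
Functions on a family are represented by functions on all finsets, considered up to equality on
that family. -/
structure InclusionBijective (𝒜 ℬ : Finset (Finset α)) : Prop where
  eqOn_of_eqOn : ∀ ⦃v w : Finset α → M⦄,
    Set.EqOn (supersetSum 𝒜 v) (supersetSum 𝒜 w) ℬ → Set.EqOn v w 𝒜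
  exists_eqOn : ∀ f : Finset α → M, ∃ v, Set.EqOn (supersetSum 𝒜 v) f ℬ

lemma supersetSum_congr {v w : Finset α → M} (h : Set.EqOn v w 𝒜) (β : Finset α) :
    supersetSum 𝒜 v β = supersetSum 𝒜 w β :=
  sum_congr rfl fun _ hA ↦ h (mem_filter.1 hA).1

lemma supersetSum_eq_sum_coe (v : Finset α → M) (β : Finset α) :
    supersetSum 𝒜 v β = ∑ A : 𝒜, if β ⊆ A then v A else 0 := by
  rw [supersetSum, sum_filter, ← sum_coe_sort]

lemma supersetSum_insert (v : Finset α → M) (ha : a ∉ β) :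
    supersetSum 𝒜 v (insert a β) =
      supersetSum (𝒜.memberSubfamily a) (fun A ↦ v (insert a A)) β := by
  refine sum_nbij' (erase · a) (insert a) ?_ ?_ ?_ ?_ ?_ <;>
    simp +contextual [insert_subset_iff, subset_erase, ha, subset_insert_iff_of_notMem]

lemma supersetSum_of_notMem (v : Finset α → M) (ha : a ∉ β) :
    supersetSum 𝒜 v β = supersetSum (𝒜.nonMemberSubfamily a) v β +
      supersetSum (𝒜.memberSubfamily a) (fun A ↦ v (insert a A)) β := by
  have hmem : ({A ∈ 𝒜 | β ⊆ A}.filter (a ∈ ·)) = {A ∈ 𝒜 | insert a β ⊆ A} := by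
    ext A
    simp only [mem_filter, insert_subset_iff]
    tauto
  have hnonmem : ({A ∈ 𝒜 | β ⊆ A}.filter (a ∉ ·)) = {A ∈ 𝒜.nonMemberSubfamily a | β ⊆ A} := by
    rw [nonMemberSubfamily, filter_comm]
  rw [← supersetSum_insert v ha, add_comm]
  simp only [supersetSum, ← hmem, ← hnonmem, sum_filter_add_sum_filter_not]

lemma supersetSum_image_sdiff (v : Finset α → M) (h𝒜 : ∀ A ∈ 𝒜, A ⊆ N) (hβ : β ⊆ N) :
    supersetSum (𝒜.image (N \ ·)) v β = ∑ A ∈ 𝒜 with Disjoint β A, v (N \ A) := by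
  have hinj : Set.InjOn (N \ ·) (𝒜 : Set (Finset α)) :=
    Set.LeftInvOn.injOn fun A hA ↦ Finset.sdiff_sdiff_eq_self (h𝒜 A hA)
  simp only [supersetSum, sum_filter, sum_image hinj, subset_sdiff, hβ, true_and]

lemma alternatingSum_supersetSum (v : Finset α → M) (β : Finset α) :
    alternatingSum (supersetSum 𝒜 v) β = ∑ A ∈ 𝒜 with Disjoint β A, v A := by
  calc alternatingSum (supersetSum 𝒜 v) β
      = ∑ A ∈ 𝒜, ∑ γ ∈ (β ∩ A).powerset, (-1 : ℤ) ^ #γ • v A := by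
        simp only [alternatingSum, supersetSum, smul_sum]
        refine sum_comm' fun γ A ↦ ?_
        simp only [mem_powerset, mem_filter, subset_inter_iff]
        tauto
    _ = ∑ A ∈ 𝒜 with Disjoint β A, v A := by
        simp only [← sum_smul, sum_powerset_neg_one_pow_card, ite_smul, one_smul, zero_smul,
          ← disjoint_iff_inter_eq_empty, sum_filter]

namespace InclusionBijective

lemma singleton_empty : InclusionBijective M ({∅} : Finset (Finset α)) {∅} where
  eqOn_of_eqOn := by simp [supersetSum]
  exists_eqOn f := ⟨f, by simp [supersetSum]⟩

/-- Ordering rows and columns by whether they contain `a` makes the inclusion matrix block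
triangular: no member of `𝒜` avoiding `a` contains a member of `ℬ` through `a`. -/
lemma of_subfamilies (a : α)
    (h₀ : InclusionBijective M (𝒜.nonMemberSubfamily a) (ℬ.nonMemberSubfamily a))
    (h₁ : InclusionBijective M (𝒜.memberSubfamily a) (ℬ.memberSubfamily a)) :
    InclusionBijective M 𝒜 ℬ where
  eqOn_of_eqOn v w hvw := by
    have hmem : Set.EqOn (fun A ↦ v (insert a A)) (fun A ↦ w (insert a A))
        (𝒜.memberSubfamily a) := by
      refine h₁.eqOn_of_eqOn fun β hβ ↦ ?_
      obtain ⟨hβℬ, haβ⟩ := mem_memberSubfamily.1 hβ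
      simpa only [supersetSum_insert _ haβ] using hvw hβℬ
    have hnonmem : Set.EqOn v w (𝒜.nonMemberSubfamily a) := by
      refine h₀.eqOn_of_eqOn fun β hβ ↦ ?_
      obtain ⟨hβℬ, haβ⟩ := mem_nonMemberSubfamily.1 hβ
      have hβvw := hvw hβℬ
      rwa [supersetSum_of_notMem v haβ, supersetSum_of_notMem w haβ, supersetSum_congr hmem,
        add_left_inj] at hβvw
    intro A hA
    by_cases haA : a ∈ A
    · have hAa : A.erase a ∈ 𝒜.memberSubfamily a :=
        mem_memberSubfamily.2 ⟨by rwa [insert_erase haA], notMem_erase a A⟩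
      simpa only [insert_erase haA] using hmem hAa
    · exact hnonmem (mem_nonMemberSubfamily.2 ⟨hA, haA⟩)
  exists_eqOn f := by
    obtain ⟨v₁, hv₁⟩ := h₁.exists_eqOn fun β ↦ f (insert a β)
    obtain ⟨v₀, hv₀⟩ := h₀.exists_eqOn fun β ↦ f β - supersetSum (𝒜.memberSubfamily a) v₁ β
    let v : Finset α → M := fun A ↦ if a ∈ A then v₁ (A.erase a) else v₀ A
    have hmem : Set.EqOn (fun A ↦ v (insert a A)) v₁ (𝒜.memberSubfamily a) := fun A hA ↦ by
      simp [v, erase_insert (mem_memberSubfamily.1 hA).2]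
    have hnonmem : Set.EqOn v v₀ (𝒜.nonMemberSubfamily a) := fun A hA ↦
      if_neg (mem_nonMemberSubfamily.1 hA).2
    refine ⟨v, fun β hβ ↦ ?_⟩
    by_cases haβ : a ∈ β
    · have hβa : β.erase a ∈ ℬ.memberSubfamily a :=
        mem_memberSubfamily.2 ⟨by rwa [insert_erase haβ], notMem_erase a β⟩
      rw [← insert_erase haβ, supersetSum_insert _ (notMem_erase a β), supersetSum_congr hmem]
      exact hv₁ hβa
    · rw [supersetSum_of_notMem _ haβ, supersetSum_congr hmem, supersetSum_congr hnonmem,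
        hv₀ (mem_nonMemberSubfamily.2 ⟨hβ, haβ⟩), sub_add_cancel]

lemma image_sdiff (h : InclusionBijective M 𝒜 ℬ) (h𝒜 : ∀ A ∈ 𝒜, A ⊆ N)
    (hℬ : ∀ β ∈ ℬ, β ⊆ N) (hlower : IsLowerSet (ℬ : Set (Finset α))) :
    InclusionBijective M (𝒜.image (N \ ·)) ℬ := by
  have hcompl (v : Finset α → M) {β : Finset α} (hβ : β ∈ ℬ) :
      supersetSum (𝒜.image (N \ ·)) v β =
        alternatingSum (supersetSum 𝒜 fun A ↦ v (N \ A)) β := by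
    rw [supersetSum_image_sdiff v h𝒜 (hℬ β hβ), alternatingSum_supersetSum]
  have hcompl_symm (v : Finset α → M) {β : Finset α} (hβ : β ∈ ℬ) :
      supersetSum 𝒜 (fun A ↦ v (N \ A)) β =
        alternatingSum (supersetSum (𝒜.image (N \ ·)) v) β := by
    rw [alternatingSum_congr fun γ hγ ↦ hcompl v (hlower hγ hβ), alternatingSum_alternatingSum]
  constructor
  · intro v w hvw
    have hEq : Set.EqOn (fun A ↦ v (N \ A)) (fun A ↦ w (N \ A)) 𝒜 :=
      h.eqOn_of_eqOn fun β hβ ↦ by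
        rw [hcompl_symm v hβ, hcompl_symm w hβ, alternatingSum_congr fun γ hγ ↦ hvw (hlower hγ hβ)]
    rw [coe_image]
    rintro _ ⟨A, hA, rfl⟩
    exact hEq hA
  · intro f
    obtain ⟨v, hv⟩ := h.exists_eqOn (alternatingSum f)
    have hinv : Set.EqOn (fun A ↦ v (N \ (N \ A))) v 𝒜 := fun A hA ↦
      congrArg v (Finset.sdiff_sdiff_eq_self (h𝒜 A hA))
    refine ⟨fun A ↦ v (N \ A), fun β hβ ↦ ?_⟩
    rw [hcompl _ hβ, alternatingSum_congr fun γ _ ↦ supersetSum_congr hinv γ,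
      alternatingSum_congr fun γ hγ ↦ hv (hlower hγ hβ), alternatingSum_alternatingSum]

lemma bijective (h : InclusionBijective M 𝒜 ℬ) :
    Function.Bijective fun (v : 𝒜 → M) (β : ℬ) ↦
      ∑ A : 𝒜, if (β : Finset α) ⊆ (A : Finset α) then v A else 0 := by
  constructor
  · intro v w hvw
    have hextend (u : 𝒜 → M) (A : 𝒜) : Function.extend Subtype.val u 0 A.1 = u A :=
      Subtype.val_injective.extend_apply u 0 A
    have hEq : Set.EqOn (Function.extend Subtype.val v 0) (Function.extend Subtype.val w 0) 𝒜 :=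
      h.eqOn_of_eqOn fun β hβ ↦ by
        simpa only [supersetSum_eq_sum_coe, hextend] using congrFun hvw ⟨β, hβ⟩
    funext A
    simpa only [hextend] using hEq A.2
  · intro f
    obtain ⟨v, hv⟩ := h.exists_eqOn (Function.extend Subtype.val f 0)
    refine ⟨fun A ↦ v A, funext fun β ↦ ?_⟩
    calc ∑ A : 𝒜, (if β.1 ⊆ A.1 then v A else 0)
        = supersetSum 𝒜 v β := (supersetSum_eq_sum_coe v β).symm
      _ = Function.extend Subtype.val f 0 β.1 := hv β.2
      _ = f β := Subtype.val_injective.extend_apply f 0 β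

end InclusionBijective

end InclusionMatrix

section Standard

variable {n k : ℕ} {β γ : Finset ℕ}

lemma card_filter_le_orderEmbOfFin {α : Type*} [LinearOrder α] (s : Finset α) {m : ℕ}
    (h : #s = m) (i : Fin m) : #{y ∈ s | y ≤ s.orderEmbOfFin h i} = i + 1 := by
  calc #{y ∈ s | y ≤ s.orderEmbOfFin h i}
      = #{y ∈ univ.map (s.orderEmbOfFin h).toEmbedding | y ≤ s.orderEmbOfFin h i} := by
        rw [map_orderEmbOfFin_univ]
    _ = #(Iic i) := by
        rw [filter_map, card_map]
        congr 1
        ext j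
        simp
    _ = i + 1 := Fin.card_Iic i

lemma isStandard_iff : IsStandard β ↔ ∀ x ∈ β, 2 * #{y ∈ β | y ≤ x} ≤ x := by
  have hget (i : Fin #β) : (β.sort (· ≤ ·)).getD i 0 = β.orderEmbOfFin rfl i := by
    rw [orderEmbOfFin_apply, List.getD_eq_getElem _ _ (by simp)]
    rfl
  have hrange : (∀ x ∈ β, 2 * #{y ∈ β | y ≤ x} ≤ x) ↔
      ∀ i : Fin #β, 2 * #{y ∈ β | y ≤ β.orderEmbOfFin rfl i} ≤ β.orderEmbOfFin rfl i := by
    rw [← Set.forall_mem_range (p := fun x ↦ 2 * #{y ∈ β | y ≤ x} ≤ x), range_orderEmbOfFin]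
    rfl
  simp only [hrange, card_filter_le_orderEmbOfFin]
  simp only [← hget]
  exact ⟨fun h i ↦ h i i.2, fun h i hi ↦ h ⟨i, hi⟩⟩

lemma IsStandard.mono (h : IsStandard β) (hγ : γ ⊆ β) : IsStandard γ := by
  rw [isStandard_iff] at *
  intro x hx
  grw [hγ]
  exact h x (hγ hx)

lemma IsStandard.two_mul_card_le (h : IsStandard β) (hβ : β ⊆ Icc 1 n) : 2 * #β ≤ n := by
  rcases β.eq_empty_or_nonempty with rfl | hne
  · simp
  · have hmax := isStandard_iff.1 h _ (β.max'_mem hne)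
    rw [filter_true_of_mem fun x hx ↦ β.le_max' x hx] at hmax
    exact hmax.trans (mem_Icc.1 (hβ (β.max'_mem hne))).2

lemma IsStandard.insert_succ (h : IsStandard β) (hβ : β ⊆ Icc 1 n) (hcard : 2 * (#β + 1) ≤ n + 1) :
    IsStandard (insert (n + 1) β) := by
  rw [isStandard_iff] at *
  intro x hx
  rcases mem_insert.1 hx with rfl | hx
  · grw [card_filter_le, card_insert_le, hcard]
  · have hxn : x ≤ n := (mem_Icc.1 (hβ hx)).2
    rw [filter_insert, if_neg (by omega)]
    exact h x hx

lemma mem_ksubsets {A : Finset ℕ} : A ∈ ksubsets n k ↔ A ⊆ Icc 1 n ∧ #A = k := by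
  simp [ksubsets]

lemma mem_stdLe : β ∈ stdLe n k ↔ β ⊆ Icc 1 n ∧ IsStandard β ∧ #β ≤ k := by
  simp [stdLe]

lemma ksubsets_zero (n : ℕ) : ksubsets n 0 = {∅} := by
  ext A
  simp +contextual [mem_ksubsets]

lemma stdLe_zero (n : ℕ) : stdLe n 0 = {∅} := by
  ext β
  simp only [mem_stdLe, Nat.le_zero, card_eq_zero, mem_singleton]
  refine ⟨fun h ↦ h.2.2, ?_⟩
  rintro rfl
  simp [IsStandard]

lemma subset_Icc_iff_of_notMem (h : n + 1 ∉ β) : β ⊆ Icc 1 (n + 1) ↔ β ⊆ Icc 1 n := by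
  rw [← insert_Icc_right_eq_Icc_add_one (by omega), subset_insert_iff_of_notMem h]

lemma insert_subset_Icc_iff (h : n + 1 ∉ β) :
    insert (n + 1) β ⊆ Icc 1 (n + 1) ↔ β ⊆ Icc 1 n := by
  simp [insert_subset_iff, subset_Icc_iff_of_notMem h]

lemma succ_notMem_of_subset_Icc (h : β ⊆ Icc 1 n) : n + 1 ∉ β :=
  notMem_mono h (by simp)

lemma nonMemberSubfamily_ksubsets_succ (n k : ℕ) :
    (ksubsets (n + 1) k).nonMemberSubfamily (n + 1) = ksubsets n k := by
  ext A
  simp only [mem_nonMemberSubfamily, mem_ksubsets]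
  grind [subset_Icc_iff_of_notMem, succ_notMem_of_subset_Icc]

lemma memberSubfamily_ksubsets_succ (n k : ℕ) :
    (ksubsets (n + 1) (k + 1)).memberSubfamily (n + 1) = ksubsets n k := by
  ext A
  simp only [mem_memberSubfamily, mem_ksubsets]
  grind [insert_subset_Icc_iff, succ_notMem_of_subset_Icc]

lemma nonMemberSubfamily_stdLe_succ (n k : ℕ) :
    (stdLe (n + 1) k).nonMemberSubfamily (n + 1) = stdLe n k := by
  ext β
  simp only [mem_nonMemberSubfamily, mem_stdLe]
  grind [subset_Icc_iff_of_notMem, succ_notMem_of_subset_Icc]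

lemma memberSubfamily_stdLe_succ (h : 2 * (k + 1) ≤ n + 1) :
    (stdLe (n + 1) (k + 1)).memberSubfamily (n + 1) = stdLe n k := by
  ext β
  simp only [mem_memberSubfamily, mem_stdLe]
  constructor
  · rintro ⟨⟨hsub, hstd, hcard⟩, hn⟩
    rw [card_insert_of_notMem hn] at hcard
    exact ⟨(insert_subset_Icc_iff hn).1 hsub, hstd.mono (subset_insert _ _), by omega⟩
  · rintro ⟨hsub, hstd, hcard⟩
    have hn := succ_notMem_of_subset_Icc hsub
    rw [card_insert_of_notMem hn]
    exact ⟨⟨(insert_subset_Icc_iff hn).2 hsub, hstd.insert_succ hsub (by omega), by omega⟩, hn⟩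

lemma isLowerSet_stdLe (n k : ℕ) : IsLowerSet (stdLe n k : Set (Finset ℕ)) := by
  intro β γ hγ hβ
  obtain ⟨hsub, hstd, hcard⟩ := mem_stdLe.1 hβ
  exact mem_stdLe.2 ⟨hγ.trans hsub, hstd.mono hγ, (card_le_card hγ).trans hcard⟩

lemma stdLe_succ_right (h : n ≤ 2 * k + 1) : stdLe n (k + 1) = stdLe n k := by
  ext β
  simp only [mem_stdLe, and_congr_right_iff]
  intro hsub hstd
  have := hstd.two_mul_card_le hsub
  omega

lemma image_sdiff_ksubsets (h : k ≤ n) :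
    (ksubsets n k).image (Icc 1 n \ ·) = ksubsets n (n - k) := by
  ext A
  simp only [mem_image, mem_ksubsets]
  constructor
  · rintro ⟨B, ⟨hB, hcard⟩, rfl⟩
    simp [card_sdiff_of_subset hB, hcard]
  · rintro ⟨hA, hcard⟩
    refine ⟨Icc 1 n \ A, ⟨sdiff_subset, ?_⟩, Finset.sdiff_sdiff_eq_self hA⟩
    rw [card_sdiff_of_subset hA, Nat.card_Icc]
    omega

end Standard

section Bier

variable {M : Type*} [AddCommGroup M] {n k : ℕ}

lemma inclusionBijective_ksubsets_stdLe_succ_succ (hnk : 2 * (k + 1) ≤ n + 1)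
    (h₀ : InclusionBijective M (ksubsets n (k + 1)) (stdLe n (k + 1)))
    (h₁ : InclusionBijective M (ksubsets n k) (stdLe n k)) :
    InclusionBijective M (ksubsets (n + 1) (k + 1)) (stdLe (n + 1) (k + 1)) := by
  apply InclusionBijective.of_subfamilies (n + 1)
  · rwa [nonMemberSubfamily_ksubsets_succ, nonMemberSubfamily_stdLe_succ]
  · rwa [memberSubfamily_ksubsets_succ, memberSubfamily_stdLe_succ hnk]

lemma inclusionBijective_ksubsets_stdLe_two_mul_add_one
    (h : InclusionBijective M (ksubsets (2 * k + 1) k) (stdLe (2 * k + 1) k)) :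
    InclusionBijective M (ksubsets (2 * k + 1) (k + 1)) (stdLe (2 * k + 1) (k + 1)) := by
  have hrows : (ksubsets (2 * k + 1) k).image (Icc 1 (2 * k + 1) \ ·) =
      ksubsets (2 * k + 1) (k + 1) := by
    rw [image_sdiff_ksubsets (by omega)]
    congr 1
    omega
  rw [stdLe_succ_right le_rfl, ← hrows]
  exact h.image_sdiff (fun _ hA ↦ (mem_ksubsets.1 hA).1) (fun _ hβ ↦ (mem_stdLe.1 hβ).1)
    (isLowerSet_stdLe _ _)

theorem inclusionBijective_ksubsets_stdLe (h : 2 * k ≤ n + 1) :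
    InclusionBijective M (ksubsets n k) (stdLe n k) := by
  induction k generalizing n with
  | zero =>
    rw [ksubsets_zero, stdLe_zero]
    exact .singleton_empty
  | succ k ihk =>
    have hn : 2 * k + 1 ≤ n := by omega
    induction n, hn using Nat.le_induction with
    | base => exact inclusionBijective_ksubsets_stdLe_two_mul_add_one (ihk (by omega))
    | succ n hn ihn =>
      exact inclusionBijective_ksubsets_stdLe_succ_succ (by omega) (ihn (by omega))
        (ihk (by omega))

end Bier

theorem statement2_general {M : Type*} [AddCommGroup M] (n k : ℕ) (h : 2 * k ≤ n + 1) :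
    Function.Bijective fun (v : ↥(ksubsets n k) → M) (β : ↥(stdLe n k)) =>
      ∑ A : ↥(ksubsets n k), if (β : Finset ℕ) ⊆ (A : Finset ℕ) then v A else 0 :=
  (inclusionBijective_ksubsets_stdLe h).bijective

/-- The ℤ-linear map sending `v` (a function on `k`-subsets) to the function
`β ↦ Σ_{A a k-subset, β ⊆ A} v(A)` on standard `(≤ k)`-subsets is bijective;
i.e. the Bier matrix `P_k` is square and unimodular. -/
theorem statement2 (n k : ℕ) (h : (n : ℤ) ≥ 2 * k - 1) :
    Function.Bijective fun (v : ↥(ksubsets n k) → ℤ) (β : ↥(stdLe n k)) =>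
      ∑ A : ↥(ksubsets n k), if (β : Finset ℕ) ⊆ (A : Finset ℕ) then v A else 0 :=
  statement2_general n k (by omega)
end

section
/- Let 0 ≤ i ≤ j be integers with 3j ≤ n + 1, and set μ_s = C(n,s) − C(n,s−1). Fix any bijections identifying the standard i-element subsets of {1,…,n} with {0,…,μ_i−1} and the standard j-element subsets with {0,…,μ_j−1}. Then there exist unimodular integer matrices E of size μ_i × μ_i and F of size μ_j × μ_j such that E · W_{i,j} · F = D_{i,j}, where D_{i,j} is the μ_i × μ_j matrix whose (t,t) entry equals C(j−s, i−s) for the unique s with μ_{s−1} ≤ t < μ_s (for 0 ≤ t < μ_i) and whose other entries are zero. In particular, W_{i,j} has a diagonal form whose nonzero diagonal entries are C(j−s, i−s) with multiplicity μ_s − μ_{s−1} for 0 ≤ s ≤ i. -/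
open scoped Classical

/-- Integer binomial coefficient with the convention `C x y = 0` unless `0 ≤ y ≤ x`. -/
noncomputable def C (x y : ℤ) : ℤ :=
  if 0 ≤ y ∧ y ≤ x then (x.toNat).choose y.toNat else 0

/-- `μ_s(n) = C(n,s) − C(n,s−1)` (so `μ_{−1} = 0`). -/
noncomputable def mu (n : ℕ) (s : ℤ) : ℤ := C n s - C n (s - 1)

/-- The standard `k`-element subsets of `{1,…,n}`. -/
noncomputable def stdSets (n k : ℕ) : Finset (Finset ℕ) :=
  (Finset.Icc 1 n).powerset.filter fun β => IsStandard β ∧ β.card = k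

/-- The standard inclusion matrix `W_{i,j}`. -/
noncomputable def W (n i j : ℕ) : Matrix ↥(stdSets n i) ↥(stdSets n j) ℤ :=
  Matrix.of fun α β => if (α : Finset ℕ) ⊆ (β : Finset ℕ) then 1 else 0

/-- The `μ_i × μ_j` diagonal matrix `D_{i,j}` whose `(t,t)` entry is `C(j−s,i−s)`
for the unique `s` with `μ_{s−1} ≤ t < μ_s`. -/
noncomputable def Dmat (n i j : ℕ) :
    Matrix (Fin (mu n i).toNat) (Fin (mu n j).toNat) ℤ :=
  Matrix.of fun t u =>
    if (t : ℕ) = (u : ℕ) then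
      ∑ s ∈ Finset.range (i + 1),
        if mu n ((s : ℤ) - 1) ≤ ((t : ℕ) : ℤ) ∧ ((t : ℕ) : ℤ) < mu n s then
          ((j - s).choose (i - s) : ℤ)
        else 0
    else 0

/-!
Any family `F` of sets has an iterated down-compression, of the same size as `F`. Eliminating one
ground element at a time, in an order for which the reduction is triangular, shows that the
functions `x_α = [α ⊆ ·]` on `F`, for `α` in this compression, form a `ℤ`-basis of all integer
functions on `F`. For the standard sets, let `S_j` be the compression of `stdSets n j`.

Since subsets of standard sets are standard, `W_{i,j}` sends the function `x_α` on the standard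
`i`-subsets to `C(j - |α|, i - |α|)` times the function `x_α` on the standard `j`-subsets. When `n`
is large enough, `S_i ⊆ S_j`, and then `S_i` must consist of all members of `S_j` of size at most
`i`: if such an `α` were missing from `S_i`, expanding `x_α` on the standard `i`-subsets and
applying `W_{i,j}` would give a linear relation among the basis functions indexed by `S_j`. So
`W_{i,j}` is diagonal in the two bases, and sorting `S_j` by size gives the order of the diagonal
entries.
-/

section Preliminaries

lemma count_mem_le_card (β : Finset ℕ) (k : ℕ) : Nat.count (· ∈ β) k ≤ β.card := by
  rw [Nat.count_eq_card_filter_range, Finset.filter_mem_eq_inter]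
  exact Finset.card_le_card Finset.inter_subset_right

lemma card_filter_powersetCard_subset {α : Type*} [DecidableEq α] {s t : Finset α} {k : ℕ}
    (hst : s ⊆ t) (hk : s.card ≤ k) :
    ((t.powersetCard k).filter (s ⊆ ·)).card = (t.card - s.card).choose (k - s.card) := by
  rw [← Finset.card_sdiff_of_subset hst, ← Finset.card_powersetCard]
  refine Finset.card_nbij' (· \ s) (· ∪ s) (fun u hu => ?_) (fun u hu => ?_) (fun u hu => ?_)
    (fun u hu => ?_)
  all_goals simp only [Finset.coe_filter, Set.mem_ofPred_eq, Finset.mem_coe,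
    Finset.mem_powersetCard] at hu ⊢
  · exact ⟨Finset.sdiff_subset_sdiff hu.1.1 subset_rfl,
      by rw [Finset.card_sdiff_of_subset hu.2, hu.1.2]⟩
  · have hdisj : Disjoint u s := Finset.sdiff_disjoint.mono_left hu.1
    refine ⟨⟨Finset.union_subset (hu.1.trans Finset.sdiff_subset) hst, ?_⟩,
      Finset.subset_union_right⟩
    rw [Finset.card_union_of_disjoint hdisj, hu.2, Nat.sub_add_cancel hk]
  · exact Finset.sdiff_union_of_subset hu.2
  · have hdisj : Disjoint u s := Finset.sdiff_disjoint.mono_left hu.1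
    exact Finset.union_sdiff_cancel_right hdisj

lemma exists_equiv_fin_lt_card_filter_le_iff {T β : Type*} [Fintype T] [LinearOrder β]
    (f : T → β) {N : ℕ} (hN : Fintype.card T = N) :
    ∃ e : Fin N ≃ T, ∀ (t : Fin N) (b : β),
      (t : ℕ) < (Finset.univ.filter (f · ≤ b)).card ↔ f (e t) ≤ b := by
  obtain ⟨e⟩ : Nonempty (Fin N ≃ T) := ⟨(Fintype.equivFinOfCardEq hN).symm⟩
  let σ := Tuple.sort (f ∘ e)
  refine ⟨σ.trans e, fun t b => ?_⟩
  have hcard : (Finset.univ.filter (f · ≤ b)).card =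
      (Finset.univ.filter ((f ∘ e ∘ σ) · ≤ b)).card := by
    rw [← Fintype.card_subtype, ← Fintype.card_subtype]
    exact (Fintype.card_congr ((σ.trans e).subtypeEquiv fun _ => Iff.rfl)).symm
  rw [hcard]
  exact Tuple.lt_card_le_iff_apply_le_of_monotone (Tuple.monotone_sort (f ∘ e))

open scoped Matrix in
lemma isUnit_submatrix_of_span_row_eq_top {ι κ R : Type*} [Fintype ι] [DecidableEq ι]
    [CommRing R] {M : Matrix ι κ R} (hM : Submodule.span R (Set.range M.row) = ⊤) (e : ι ≃ κ) :
    IsUnit (M.submatrix id e) := by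
  have hsurj : Function.Surjective M.vecMulLinear :=
    LinearMap.range_eq_top.1 ((range_vecMulLinear M).trans hM)
  refine Matrix.vecMul_surjective_iff_isUnit.1 fun v => ?_
  obtain ⟨w, hw⟩ := hsurj (v ∘ e.symm)
  refine ⟨w, ?_⟩
  calc w ᵥ* M.submatrix id e
      = (w ᵥ* M) ∘ e := rfl
    _ = (v ∘ e.symm) ∘ e := congrArg (· ∘ e) hw
    _ = v := by rw [Function.comp_assoc, e.symm_comp_self, Function.comp_id]

end Preliminaries

section Compression

variable {α : Type*} [DecidableEq α]

/-- The down-compression of `F` along all elements of `l`, the last one first. When `l` lists the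
ground set, its members are the sets order-shattered by `F`; they index a basis of the functions
on `F`. -/
def iteratedCompression (l : List α) (F : Finset (Finset α)) : Finset (Finset α) :=
  l.foldr Down.compression F

lemma card_iteratedCompression (l : List α) (F : Finset (Finset α)) :
    (iteratedCompression l F).card = F.card := by
  induction l with
  | nil => rfl
  | cons a l ih => exact (Down.card_compression a _).trans ih

lemma exists_superset_of_mem_iteratedCompression {l : List α} {F : Finset (Finset α)}
    {s : Finset α} (hs : s ∈ iteratedCompression l F) : ∃ t ∈ F, s ⊆ t := by
  induction l generalizing s with
  | nil => exact ⟨s, hs, subset_rfl⟩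
  | cons a l ih =>
    rcases Down.mem_compression.1 hs with ⟨hs, -⟩ | ⟨-, hs⟩
    · exact ih hs
    · obtain ⟨t, ht, hst⟩ := ih hs
      exact ⟨t, ht, (Finset.subset_insert a s).trans hst⟩

lemma nonMemberSubfamily_compression {a b : α} (hab : a ≠ b) (F : Finset (Finset α)) :
    (Down.compression b F).nonMemberSubfamily a =
      Down.compression b (F.nonMemberSubfamily a) := by
  ext s
  simp only [Finset.mem_nonMemberSubfamily, Down.mem_compression, Finset.mem_erase,
    Finset.mem_insert]
  tauto

lemma memberSubfamily_compression {a b : α} (hab : a ≠ b) (F : Finset (Finset α)) :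
    (Down.compression b F).memberSubfamily a = Down.compression b (F.memberSubfamily a) := by
  ext s
  simp only [Finset.mem_memberSubfamily, Down.mem_compression, Finset.mem_erase,
    Finset.mem_insert, Finset.erase_insert_of_ne hab, Finset.insert_comm b a]
  tauto

lemma nonMemberSubfamily_iteratedCompression {a : α} {l : List α} (ha : a ∉ l)
    (F : Finset (Finset α)) :
    (iteratedCompression l F).nonMemberSubfamily a =
      iteratedCompression l (F.nonMemberSubfamily a) := by
  induction l with
  | nil => rfl
  | cons b l ih =>
    obtain ⟨hab, ha⟩ := not_or.1 (mt List.mem_cons.2 ha)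
    exact (nonMemberSubfamily_compression hab _).trans (congrArg _ (ih ha))

lemma memberSubfamily_iteratedCompression {a : α} {l : List α} (ha : a ∉ l)
    (F : Finset (Finset α)) :
    (iteratedCompression l F).memberSubfamily a =
      iteratedCompression l (F.memberSubfamily a) := by
  induction l with
  | nil => rfl
  | cons b l ih =>
    obtain ⟨hab, ha⟩ := not_or.1 (mt List.mem_cons.2 ha)
    exact (memberSubfamily_compression hab _).trans (congrArg _ (ih ha))

lemma mem_iteratedCompression_cons {a : α} {l : List α} (ha : a ∉ l) {F : Finset (Finset α)}
    {s : Finset α} (has : a ∉ s) : s ∈ iteratedCompression (a :: l) F ↔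
      s ∈ iteratedCompression l (F.nonMemberSubfamily a) ∨
        s ∈ iteratedCompression l (F.memberSubfamily a) := by
  rw [← nonMemberSubfamily_iteratedCompression ha, ← memberSubfamily_iteratedCompression ha,
    Finset.mem_nonMemberSubfamily, Finset.mem_memberSubfamily]
  simp only [iteratedCompression, List.foldr_cons, Down.mem_compression,
    Finset.erase_eq_of_notMem has]
  tauto

lemma insert_mem_iteratedCompression_cons {a : α} {l : List α} (ha : a ∉ l)
    {F : Finset (Finset α)} {s : Finset α} (has : a ∉ s) :
    insert a s ∈ iteratedCompression (a :: l) F ↔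
      s ∈ iteratedCompression l (F.nonMemberSubfamily a) ∧
        s ∈ iteratedCompression l (F.memberSubfamily a) := by
  rw [← nonMemberSubfamily_iteratedCompression ha, ← memberSubfamily_iteratedCompression ha,
    Finset.mem_nonMemberSubfamily, Finset.mem_memberSubfamily]
  simp only [iteratedCompression, List.foldr_cons, Down.mem_compression,
    Finset.erase_insert has, Finset.insert_idem]
  tauto

end Compression

section Basis

variable {α : Type*} [DecidableEq α] (R : Type*)

/-- The indicator function on `F` of the interval `[s, s ∪ T]` of sets. As `T` grows from `∅` to
the ground set it interpolates between point masses and the functions `inclusionIndicator`. -/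
def intervalIndicator [Zero R] [One R] (F : Finset (Finset α)) (T s : Finset α) : F → R :=
  fun t => if s ⊆ t ∧ (t : Finset α) ⊆ s ∪ T then 1 else 0

/-- The function `t ↦ [s ⊆ t]` on `F`, that is, the restriction to `F` of the squarefree monomial
with support `s`. -/
def inclusionIndicator [Zero R] [One R] (F : Finset (Finset α)) (s : Finset α) : F → R :=
  fun t => if s ⊆ t then 1 else 0

variable {F : Finset (Finset α)} {T s : Finset α} {a : α} {l : List α}

lemma intervalIndicator_empty_of_notMem [Zero R] [One R] (hs : s ∉ F) :
    intervalIndicator R F ∅ s = 0 := by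
  ext t
  refine if_neg fun ⟨hst, hts⟩ => hs ?_
  rw [Finset.union_empty] at hts
  exact hst.antisymm hts ▸ t.2

lemma intervalIndicator_insert_of_mem [Zero R] [One R] (ha : a ∈ s) :
    intervalIndicator R F (insert a T) s = intervalIndicator R F T s := by
  ext t
  simp only [intervalIndicator, Finset.union_insert,
    Finset.insert_eq_of_mem (Finset.mem_union_left T ha)]

lemma intervalIndicator_insert_of_notMem [AddMonoidWithOne R] (haT : a ∉ T) (has : a ∉ s) :
    intervalIndicator R F (insert a T) s =
      intervalIndicator R F T s + intervalIndicator R F T (insert a s) := by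
  ext ⟨t, ht⟩
  have hsplit : s ⊆ t ∧ t ⊆ s ∪ insert a T ↔
      s ⊆ t ∧ t ⊆ s ∪ T ∨ insert a s ⊆ t ∧ t ⊆ insert a s ∪ T := by
    by_cases hat : a ∈ t <;> grind
  have hdisj : ¬((s ⊆ t ∧ t ⊆ s ∪ T) ∧ insert a s ⊆ t ∧ t ⊆ insert a s ∪ T) := by grind
  simp only [intervalIndicator, Pi.add_apply]
  by_cases hleft : s ⊆ t ∧ t ⊆ s ∪ T
  · have hright : ¬(insert a s ⊆ t ∧ t ⊆ insert a s ∪ T) := fun h => hdisj ⟨hleft, h⟩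
    rw [if_pos (hsplit.2 (.inl hleft)), if_pos hleft, if_neg hright, add_zero]
  · rw [if_neg hleft, zero_add]
    exact if_congr (hsplit.trans (or_iff_right hleft)) rfl rfl

lemma intervalIndicator_eq_sub [AddGroupWithOne R] (haT : a ∉ T) (has : a ∉ s) :
    intervalIndicator R F T s = intervalIndicator R F (insert a T) s -
      intervalIndicator R F (insert a T) (insert a s) := by
  rw [intervalIndicator_insert_of_mem R (Finset.mem_insert_self a s),
    intervalIndicator_insert_of_notMem R haT has, add_sub_cancel_right]

lemma intervalIndicator_eq_erase_sub [AddCommGroupWithOne R] (haT : a ∉ T) (has : a ∈ s) :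
    intervalIndicator R F T s = intervalIndicator R F (insert a T) (s.erase a) -
      intervalIndicator R F T (s.erase a) := by
  rw [intervalIndicator_insert_of_notMem R haT (Finset.notMem_erase a s),
    Finset.insert_erase has, add_sub_cancel_left]

lemma intervalIndicator_eq_inclusionIndicator [Zero R] [One R] (hF : ∀ t ∈ F, t ⊆ T) :
    intervalIndicator R F T = inclusionIndicator R F := by
  ext s t
  have hts : (t : Finset α) ⊆ s ∪ T := (hF t t.2).trans Finset.subset_union_right
  simp only [intervalIndicator, inclusionIndicator, hts, and_true]

/-- The number whose binary digits, least significant first, record which elements of `l` lie in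
`s`; comparing codes orders sets lexicographically. -/
def binaryCode (l : List α) (s : Finset α) : ℕ :=
  Nat.ofDigits 2 (l.map fun a => if a ∈ s then 1 else 0)

lemma binaryCode_cons (a : α) (l : List α) (s : Finset α) :
    binaryCode (a :: l) s = (if a ∈ s then 1 else 0) + 2 * binaryCode l s := by
  simp only [binaryCode, List.map_cons, Nat.ofDigits_cons]

lemma binaryCode_insert (ha : a ∉ l) (s : Finset α) :
    binaryCode l (insert a s) = binaryCode l s := by
  unfold binaryCode
  congr 1
  refine List.map_congr_left fun b hb => ?_
  simp only [Finset.mem_insert, ne_of_mem_of_not_mem hb ha, false_or]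

variable [Ring R]

/-- The span of the interval indicators of all sets whose code is less than `k`. -/
def lowerSpan (F : Finset (Finset α)) (l : List α) (k : ℕ) : Submodule R (F → R) :=
  Submodule.span R (intervalIndicator R F l.toFinset '' {s | binaryCode l s < k})

lemma intervalIndicator_mem_lowerSpan {k : ℕ} (hs : binaryCode l s < k) :
    intervalIndicator R F l.toFinset s ∈ lowerSpan R F l k :=
  Submodule.subset_span ⟨s, hs, rfl⟩

lemma lowerSpan_mono {k m : ℕ} (hkm : k ≤ m) : lowerSpan R F l k ≤ lowerSpan R F l m :=
  Submodule.span_mono (Set.image_mono fun _ hs => lt_of_lt_of_le hs hkm)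

lemma lowerSpan_le_lowerSpan_cons (ha : a ∉ l) (k : ℕ) :
    lowerSpan R F l k ≤ lowerSpan R F (a :: l) (2 * k) := by
  refine Submodule.span_le.2 ?_
  rintro _ ⟨s, hs : binaryCode l s < k, rfl⟩
  have haT : a ∉ l.toFinset := by simpa using ha
  have hmem : ∀ t, binaryCode l t < k →
      intervalIndicator R F (insert a l.toFinset) t ∈ lowerSpan R F (a :: l) (2 * k) := by
    intro t ht
    rw [← List.toFinset_cons]
    refine intervalIndicator_mem_lowerSpan R ?_
    rw [binaryCode_cons]
    split_ifs <;> omega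
  by_cases has : a ∈ s
  · rw [← intervalIndicator_insert_of_mem R has]
    exact hmem s hs
  · rw [intervalIndicator_eq_sub R haT has]
    exact sub_mem (hmem s hs) (hmem _ ((binaryCode_insert ha s).trans_lt hs))

lemma intervalIndicator_mem_lowerSpan_of_notMem (hl : l.Nodup)
    (hs : s ∉ iteratedCompression l F) :
    intervalIndicator R F l.toFinset s ∈ lowerSpan R F l (binaryCode l s) := by
  induction l generalizing s with
  | nil =>
    have hzero : intervalIndicator R F ∅ s = 0 := intervalIndicator_empty_of_notMem R hs
    rw [List.toFinset_nil, hzero]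
    exact zero_mem _
  | cons a l ih =>
    obtain ⟨ha, hl⟩ := List.nodup_cons.1 hl
    have haT : a ∉ l.toFinset := by simpa using ha
    have reduce : ∀ t, t ∉ iteratedCompression l F → binaryCode l t = binaryCode l s →
        intervalIndicator R F l.toFinset t ∈ lowerSpan R F (a :: l) (binaryCode (a :: l) s) := by
      intro t ht hts
      refine lowerSpan_mono R ?_ (lowerSpan_le_lowerSpan_cons R ha _ (ih hl ht))
      rw [binaryCode_cons, hts]
      omega
    have hs' : ¬(s ∈ iteratedCompression l F ∧ s.erase a ∈ iteratedCompression l F ∨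
        s ∉ iteratedCompression l F ∧ insert a s ∈ iteratedCompression l F) :=
      fun h => hs (Down.mem_compression.2 h)
    rw [List.toFinset_cons]
    by_cases has : a ∈ s
    · rw [intervalIndicator_insert_of_mem R has]
      by_cases hsl : s ∈ iteratedCompression l F
      · rw [intervalIndicator_eq_erase_sub R haT has, ← List.toFinset_cons]
        have hcode : binaryCode l (s.erase a) = binaryCode l s := by
          rw [← binaryCode_insert ha (s.erase a), Finset.insert_erase has]
        refine sub_mem (intervalIndicator_mem_lowerSpan R ?_) (reduce _ (by tauto) hcode)
        simp [binaryCode_cons, hcode, has]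
      · exact reduce s hsl rfl
    · rw [intervalIndicator_insert_of_notMem R haT has]
      rw [Finset.erase_eq_of_notMem has] at hs'
      exact add_mem (reduce s (by tauto) rfl) (reduce _ (by tauto) (binaryCode_insert ha s))

lemma lowerSpan_le_span_iteratedCompression (hl : l.Nodup) (k : ℕ) :
    lowerSpan R F l k ≤ Submodule.span R
      (intervalIndicator R F l.toFinset '' (iteratedCompression l F : Set (Finset α))) := by
  induction k using Nat.strong_induction_on with
  | _ k ih =>
    refine Submodule.span_le.2 ?_
    rintro _ ⟨s, hs : binaryCode l s < k, rfl⟩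
    by_cases hsl : s ∈ iteratedCompression l F
    · exact Submodule.subset_span ⟨s, hsl, rfl⟩
    · exact ih _ hs (intervalIndicator_mem_lowerSpan_of_notMem R hl hsl)

lemma intervalIndicator_empty_coe (t : F) : intervalIndicator R F ∅ t = Pi.single t 1 := by
  ext u
  simp only [intervalIndicator, Finset.union_empty, Pi.single_apply]
  exact if_congr ⟨fun h => Subtype.ext (h.2.antisymm h.1), fun h => h ▸ ⟨subset_rfl, subset_rfl⟩⟩
    rfl rfl

lemma span_range_intervalIndicator (T : Finset α) :
    Submodule.span R (Set.range (intervalIndicator R F T)) = ⊤ := by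
  induction T using Finset.induction_on with
  | empty =>
    rw [eq_top_iff, ← (Pi.basisFun R F).span_eq, Submodule.span_le]
    rintro _ ⟨t, rfl⟩
    rw [Pi.basisFun_apply, ← intervalIndicator_empty_coe]
    exact Submodule.subset_span ⟨t, rfl⟩
  | insert a T haT ih =>
    rw [eq_top_iff, ← ih, Submodule.span_le]
    rintro _ ⟨s, rfl⟩
    have hmem : ∀ t, intervalIndicator R F (insert a T) t ∈
        Submodule.span R (Set.range (intervalIndicator R F (insert a T))) :=
      fun t => Submodule.subset_span ⟨t, rfl⟩
    by_cases has : a ∈ s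
    · exact intervalIndicator_insert_of_mem R (T := T) has ▸ hmem s
    · exact intervalIndicator_eq_sub R haT has ▸ sub_mem (hmem s) (hmem _)

theorem span_inclusionIndicator_iteratedCompression (hl : l.Nodup)
    (hF : ∀ t ∈ F, t ⊆ l.toFinset) :
    Submodule.span R
      (inclusionIndicator R F '' (iteratedCompression l F : Set (Finset α))) = ⊤ := by
  rw [← intervalIndicator_eq_inclusionIndicator R hF, eq_top_iff,
    ← span_range_intervalIndicator R l.toFinset, Submodule.span_le]
  rintro _ ⟨s, rfl⟩
  exact lowerSpan_le_span_iteratedCompression R hl _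
    (intervalIndicator_mem_lowerSpan R (Nat.lt_succ_self (binaryCode l s)))

theorem linearIndepOn_inclusionIndicator_iteratedCompression {R : Type*} [CommRing R]
    (hl : l.Nodup) (hF : ∀ t ∈ F, t ⊆ l.toFinset) :
    LinearIndepOn R (inclusionIndicator R F) (iteratedCompression l F : Set (Finset α)) := by
  cases subsingleton_or_nontrivial R
  · exact linearIndependent_of_subsingleton
  refine linearIndependent_of_top_le_span_of_card_eq_finrank ?_ ?_
  · rw [← span_inclusionIndicator_iteratedCompression R hl hF, Set.image_eq_range]
  · rw [Module.finrank_fintype_fun_eq_card, Fintype.card_coe]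
    exact (Fintype.card_coe _).trans (card_iteratedCompression l F)

end Basis

section StandardSets

lemma isStandard_iff_count {β : Finset ℕ} :
    IsStandard β ↔ ∀ k, 2 * Nat.count (· ∈ β) (k + 1) ≤ k := by
  have hfin : {b | b ∈ β}.Finite := β.finite_toSet
  have hβ : hfin.toFinset = β := by ext; simp
  have hnth : ∀ i, (β.sort (· ≤ ·)).getD i 0 = Nat.nth (· ∈ β) i := fun i => by
    rw [Nat.nth_eq_getD_sort hfin, hβ]
  simp only [IsStandard, hnth]
  constructor
  · intro h k
    cases hc : Nat.count (· ∈ β) (k + 1) with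
    | zero => omega
    | succ c =>
      have hlt : c < Nat.count (· ∈ β) (k + 1) := by omega
      have hcard : c < β.card := hlt.trans_le (count_mem_le_card β _)
      exact (h c hcard).trans (Nat.lt_succ_iff.1 (Nat.nth_lt_of_lt_count hlt))
  · intro h i hi
    have hcount := h (Nat.nth (· ∈ β) i)
    rwa [Nat.count_nth_succ fun _ => by simpa using hi] at hcount

lemma IsStandard.mono_s9 {α β : Finset ℕ} (hβ : IsStandard β) (hαβ : α ⊆ β) : IsStandard α :=
  isStandard_iff_count.2 fun k =>
    (Nat.mul_le_mul_left 2 (Nat.count_mono_left fun _ _ h => hαβ h)).trans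
      (isStandard_iff_count.1 hβ k)

variable {n i j : ℕ} {α β : Finset ℕ}

lemma mem_stdSets : β ∈ stdSets n j ↔ β ⊆ Finset.Icc 1 n ∧ IsStandard β ∧ β.card = j := by
  rw [stdSets, Finset.mem_filter, Finset.mem_powerset]

lemma mem_stdSets_of_subset (hβ : β ∈ stdSets n j) (hαβ : α ⊆ β) :
    α ∈ stdSets n α.card := by
  obtain ⟨hsub, hstd, -⟩ := mem_stdSets.1 hβ
  exact mem_stdSets.2 ⟨hαβ.trans hsub, hstd.mono_s9 hαβ, rfl⟩

lemma count_succ_eq_card (hβ : β ⊆ Finset.Icc 1 n) : Nat.count (· ∈ β) (n + 1) = β.card := by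
  rw [Nat.count_eq_card_filter_range, Finset.filter_mem_eq_inter, Finset.inter_eq_right.2]
  exact fun b hb => Finset.mem_range.2 (Nat.lt_succ_of_le (Finset.mem_Icc.1 (hβ hb)).2)

lemma stdSets_eq_empty (h : n < 2 * j) : stdSets n j = ∅ := by
  refine Finset.eq_empty_of_forall_notMem fun β hβ => ?_
  obtain ⟨hsub, hstd, hcard⟩ := mem_stdSets.1 hβ
  have hcount := isStandard_iff_count.1 hstd n
  rw [count_succ_eq_card hsub] at hcount
  omega

lemma stdSets_zero (n : ℕ) : stdSets n 0 = {∅} := by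
  ext β
  rw [mem_stdSets, Finset.mem_singleton, Finset.card_eq_zero]
  refine ⟨fun h => h.2.2, ?_⟩
  rintro rfl
  exact ⟨Finset.empty_subset _, fun i hi => absurd hi (Nat.not_lt_zero i), rfl⟩

lemma subset_Icc_succ_iff (hβ : n + 1 ∉ β) :
    β ⊆ Finset.Icc 1 (n + 1) ↔ β ⊆ Finset.Icc 1 n := by
  rw [← Finset.insert_Icc_right_eq_Icc_add_one (Nat.le_add_left 1 n),
    Finset.subset_insert_iff_of_notMem hβ]

lemma nonMemberSubfamily_stdSets_succ (n j : ℕ) :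
    (stdSets (n + 1) j).nonMemberSubfamily (n + 1) = stdSets n j := by
  ext β
  rw [Finset.mem_nonMemberSubfamily, mem_stdSets, mem_stdSets]
  constructor
  · rintro ⟨⟨hsub, hβ⟩, hn⟩
    exact ⟨(subset_Icc_succ_iff hn).1 hsub, hβ⟩
  · rintro ⟨hsub, hβ⟩
    have hn : n + 1 ∉ β := fun h => by simpa using hsub h
    exact ⟨⟨(subset_Icc_succ_iff hn).2 hsub, hβ⟩, hn⟩

lemma isStandard_insert_succ (hβ : IsStandard β) (hcard : 2 * (β.card + 1) ≤ n + 1) :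
    IsStandard (insert (n + 1) β) := by
  refine isStandard_iff_count.2 fun k => ?_
  rcases Nat.lt_or_ge k (n + 1) with hk | hk
  · have hcount : Nat.count (· ∈ insert (n + 1) β) (k + 1) ≤ Nat.count (· ∈ β) (k + 1) :=
      Nat.count_mono_left fun b hbk hb => Finset.mem_of_mem_insert_of_ne hb (by omega)
    exact (Nat.mul_le_mul_left 2 hcount).trans (isStandard_iff_count.1 hβ k)
  · calc 2 * Nat.count (· ∈ insert (n + 1) β) (k + 1)
        ≤ 2 * (insert (n + 1) β).card := Nat.mul_le_mul_left 2 (count_mem_le_card _ _)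
      _ ≤ 2 * (β.card + 1) := Nat.mul_le_mul_left 2 (Finset.card_insert_le _ _)
      _ ≤ k := hcard.trans hk

lemma memberSubfamily_stdSets_succ (h : 2 * (j + 1) ≤ n + 1) :
    (stdSets (n + 1) (j + 1)).memberSubfamily (n + 1) = stdSets n j := by
  ext β
  rw [Finset.mem_memberSubfamily]
  constructor
  · rintro ⟨hβ, hn⟩
    obtain ⟨hsub, hstd, hcard⟩ := mem_stdSets.1 hβ
    rw [Finset.card_insert_of_notMem hn, Nat.add_right_cancel_iff] at hcard
    have hβsub := (Finset.subset_insert (n + 1) β).trans hsub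
    exact mem_stdSets.2 ⟨(subset_Icc_succ_iff hn).1 hβsub,
      hstd.mono_s9 (Finset.subset_insert (n + 1) β), hcard⟩
  · intro hβ
    obtain ⟨hsub, hstd, rfl⟩ := mem_stdSets.1 hβ
    have hn : n + 1 ∉ β := fun h => by simpa using hsub h
    refine ⟨mem_stdSets.2 ⟨Finset.insert_subset (by simp) ((subset_Icc_succ_iff hn).2 hsub),
      isStandard_insert_succ hstd h, Finset.card_insert_of_notMem hn⟩, hn⟩

lemma card_stdSets_succ (h : 2 * (j + 1) ≤ n + 1) :
    (stdSets (n + 1) (j + 1)).card = (stdSets n j).card + (stdSets n (j + 1)).card := by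
  rw [← Finset.card_memberSubfamily_add_card_nonMemberSubfamily (n + 1),
    memberSubfamily_stdSets_succ h, nonMemberSubfamily_stdSets_succ]

lemma C_natCast (n k : ℕ) : C n k = n.choose k := by
  unfold C
  split_ifs with h
  · simp
  · rw [Nat.choose_eq_zero_of_lt (by omega), Nat.cast_zero]

lemma mu_zero (n : ℕ) : mu n 0 = 1 := by
  simp [mu, C]

lemma mu_natCast_add_one (n k : ℕ) : mu n (k + 1) = n.choose (k + 1) - n.choose k := by
  rw [mu, add_sub_cancel_right, C_natCast, ← Nat.cast_add_one, C_natCast]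

lemma mu_add_one_add_one (n j : ℕ) : mu (n + 1) (j + 1) = mu n j + mu n (j + 1) := by
  rw [mu_natCast_add_one, mu_natCast_add_one]
  cases j with
  | zero => simp [mu_zero]
  | succ j =>
    rw [Nat.cast_add_one, mu_natCast_add_one, Nat.choose_succ_succ n (j + 1),
      Nat.choose_succ_succ n j]
    push_cast
    ring

theorem card_stdSets (h : 2 * j ≤ n + 1) : ((stdSets n j).card : ℤ) = mu n j := by
  induction n generalizing j with
  | zero =>
    obtain rfl : j = 0 := by omega
    rw [stdSets_zero, Finset.card_singleton, Nat.cast_zero, mu_zero, Nat.cast_one]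
  | succ n ih =>
    cases j with
    | zero => rw [stdSets_zero, Finset.card_singleton, Nat.cast_zero, mu_zero, Nat.cast_one]
    | succ j =>
      rcases Nat.lt_or_ge (n + 1) (2 * (j + 1)) with hlt | hle
      · obtain rfl : n = 2 * j := by omega
        rw [stdSets_eq_empty hlt, Nat.cast_add_one, mu_natCast_add_one, Nat.choose_symm_half]
        simp
      · rw [card_stdSets_succ hle, Nat.cast_add, ih (by omega), ih hle, Nat.cast_add_one,
          mu_add_one_add_one]

end StandardSets

section CompressedStandardSets

variable {n i j : ℕ} {α β : Finset ℕ}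

/-- The down-compression of the standard `j`-subsets of `{1, …, n}` along `1, …, n` in this order.
These sets index the bases in which the matrices `W n i j` become diagonal. -/
noncomputable def compressedStd (n j : ℕ) : Finset (Finset ℕ) :=
  iteratedCompression (List.range' 1 n).reverse (stdSets n j)

lemma reverse_range'_one_succ (n : ℕ) :
    (List.range' 1 (n + 1)).reverse = (n + 1) :: (List.range' 1 n).reverse := by
  rw [List.range'_1_concat, List.reverse_append, List.reverse_singleton, List.singleton_append,
    Nat.add_comm 1 n]

lemma notMem_reverse_range'_one (n : ℕ) : n + 1 ∉ (List.range' 1 n).reverse := by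
  rw [List.mem_reverse, List.mem_range'_1]
  omega

lemma nodup_reverse_range'_one (n : ℕ) : (List.range' 1 n).reverse.Nodup :=
  List.nodup_reverse.2 (List.nodup_range' (h := Nat.one_pos))

lemma subset_toFinset_of_mem_stdSets (hβ : β ∈ stdSets n j) :
    β ⊆ (List.range' 1 n).reverse.toFinset := by
  intro b hb
  have hbn := Finset.mem_Icc.1 ((mem_stdSets.1 hβ).1 hb)
  rw [List.mem_toFinset, List.mem_reverse, List.mem_range'_1]
  omega

lemma card_compressedStd (n j : ℕ) : (compressedStd n j).card = (stdSets n j).card :=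
  card_iteratedCompression _ _

lemma card_le_of_mem_compressedStd (hα : α ∈ compressedStd n j) : α.card ≤ j := by
  obtain ⟨β, hβ, hαβ⟩ := exists_superset_of_mem_iteratedCompression hα
  exact (Finset.card_le_card hαβ).trans_eq (mem_stdSets.1 hβ).2.2

lemma compressedStd_zero (n : ℕ) : compressedStd n 0 = {∅} := by
  refine Finset.eq_of_subset_of_card_le (fun α hα => ?_) ?_
  · exact Finset.mem_singleton.2
      (Finset.card_eq_zero.1 (Nat.le_zero.1 (card_le_of_mem_compressedStd hα)))
  · rw [card_compressedStd, stdSets_zero]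

lemma mem_compressedStd_succ (h : 2 * (j + 1) ≤ n + 1) (hα : n + 1 ∉ α) :
    α ∈ compressedStd (n + 1) (j + 1) ↔ α ∈ compressedStd n (j + 1) ∨ α ∈ compressedStd n j := by
  rw [compressedStd, reverse_range'_one_succ,
    mem_iteratedCompression_cons (notMem_reverse_range'_one n) hα,
    nonMemberSubfamily_stdSets_succ, memberSubfamily_stdSets_succ h]
  rfl

lemma insert_mem_compressedStd_succ (h : 2 * (j + 1) ≤ n + 1) (hα : n + 1 ∉ α) :
    insert (n + 1) α ∈ compressedStd (n + 1) (j + 1) ↔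
      α ∈ compressedStd n (j + 1) ∧ α ∈ compressedStd n j := by
  rw [compressedStd, reverse_range'_one_succ,
    insert_mem_iteratedCompression_cons (notMem_reverse_range'_one n) hα,
    nonMemberSubfamily_stdSets_succ, memberSubfamily_stdSets_succ h]
  rfl

theorem compressedStd_subset (hij : i ≤ j) (h : 2 * j + i ≤ n) :
    compressedStd n i ⊆ compressedStd n j := by
  induction n generalizing i j with
  | zero =>
    obtain rfl : i = j := by omega
    exact subset_rfl
  | succ n ih =>
    rcases hij.eq_or_lt with rfl | hlt
    · exact subset_rfl
    obtain ⟨j, rfl⟩ : ∃ k, j = k + 1 := ⟨j - 1, by omega⟩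
    intro α hα
    cases i with
    | zero =>
      rw [compressedStd_zero, ← compressedStd_zero n] at hα
      have hn : n + 1 ∉ α := by
        rw [compressedStd_zero, Finset.mem_singleton] at hα
        simp [hα]
      exact (mem_compressedStd_succ (by omega) hn).2
        (.inr (ih (Nat.zero_le j) (by omega) hα))
    | succ i =>
      have hlow : compressedStd n i ⊆ compressedStd n j := ih (by omega) (by omega)
      have hdiag : compressedStd n i ⊆ compressedStd n (j + 1) := ih (by omega) (by omega)
      have hhigh : compressedStd n (i + 1) ⊆ compressedStd n j := ih (by omega) (by omega)
      by_cases hn : n + 1 ∈ α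
      · rw [← Finset.insert_erase hn] at hα ⊢
        have hn' := Finset.notMem_erase (n + 1) α
        have hmem := ((insert_mem_compressedStd_succ (by omega) hn').1 hα).2
        exact (insert_mem_compressedStd_succ (by omega) hn').2 ⟨hdiag hmem, hlow hmem⟩
      · rcases (mem_compressedStd_succ (by omega) hn).1 hα with hα | hα
        · exact (mem_compressedStd_succ (by omega) hn).2 (.inr (hhigh hα))
        · exact (mem_compressedStd_succ (by omega) hn).2 (.inr (hlow hα))

lemma linearIndepOn_compressedStd (n j : ℕ) :
    LinearIndepOn ℤ (inclusionIndicator ℤ (stdSets n j)) (compressedStd n j : Set (Finset ℕ)) :=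
  linearIndepOn_inclusionIndicator_iteratedCompression (nodup_reverse_range'_one n)
    fun _ => subset_toFinset_of_mem_stdSets

lemma span_compressedStd (n j : ℕ) :
    Submodule.span ℤ
      (inclusionIndicator ℤ (stdSets n j) '' (compressedStd n j : Set (Finset ℕ))) = ⊤ :=
  span_inclusionIndicator_iteratedCompression ℤ (nodup_reverse_range'_one n)
    fun _ => subset_toFinset_of_mem_stdSets

end CompressedStandardSets

section InclusionMatrix

open scoped Matrix

variable {n i j : ℕ}

lemma filter_between_stdSets {α β : Finset ℕ} (hβ : β ∈ stdSets n j) :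
    (stdSets n i).filter (fun γ => α ⊆ γ ∧ γ ⊆ β) = (β.powersetCard i).filter (α ⊆ ·) := by
  ext γ
  rw [Finset.mem_filter, Finset.mem_filter, Finset.mem_powersetCard]
  constructor
  · exact fun ⟨hγ, hαγ, hγβ⟩ => ⟨⟨hγβ, (mem_stdSets.1 hγ).2.2⟩, hαγ⟩
  · rintro ⟨⟨hγβ, rfl⟩, hαγ⟩
    exact ⟨mem_stdSets_of_subset hβ hγβ, hαγ, hγβ⟩

theorem inclusionIndicator_vecMul_W {α : Finset ℕ} (hα : α.card ≤ i) :
    inclusionIndicator ℤ (stdSets n i) α ᵥ* W n i j =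
      ((j - α.card).choose (i - α.card) : ℤ) • inclusionIndicator ℤ (stdSets n j) α := by
  funext ⟨β, hβ⟩
  have hcount : (inclusionIndicator ℤ (stdSets n i) α ᵥ* W n i j) ⟨β, hβ⟩ =
      ((β.powersetCard i).filter (α ⊆ ·)).card := by
    rw [← filter_between_stdSets hβ, Finset.card_filter, Nat.cast_sum, ← Finset.sum_coe_sort]
    simp only [Matrix.vecMul, dotProduct, inclusionIndicator, W, Matrix.of_apply, ite_and]
    exact Finset.sum_congr rfl fun γ _ => by split_ifs <;> simp
  rw [hcount, Pi.smul_apply, smul_eq_mul, inclusionIndicator]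
  by_cases hαβ : α ⊆ β
  · rw [if_pos hαβ, card_filter_powersetCard_subset hαβ hα, (mem_stdSets.1 hβ).2.2, mul_one]
  · have hempty : (β.powersetCard i).filter (α ⊆ ·) = ∅ :=
      Finset.filter_eq_empty_iff.2 fun γ hγ hαγ =>
        hαβ (hαγ.trans (Finset.mem_powersetCard.1 hγ).1)
    rw [if_neg hαβ, hempty, Finset.card_empty, Nat.cast_zero, mul_zero]

lemma mem_compressedStd_of_card_le {α : Finset ℕ} (hij : i ≤ j)
    (hsub : compressedStd n i ⊆ compressedStd n j) (hα : α ∈ compressedStd n j)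
    (hcard : α.card ≤ i) : α ∈ compressedStd n i := by
  by_contra hαi
  let others := Submodule.span ℤ (inclusionIndicator ℤ (stdSets n j) ''
    ((compressedStd n j : Set (Finset ℕ)) \ {α}))
  have hmap : ⊤ ≤ others.comap (W n i j).vecMulLinear := by
    rw [← span_compressedStd n i, Submodule.span_le]
    rintro _ ⟨γ, hγ, rfl⟩
    have hγα : γ ≠ α := fun h => hαi (h ▸ hγ)
    change inclusionIndicator ℤ (stdSets n i) γ ᵥ* W n i j ∈ others
    rw [inclusionIndicator_vecMul_W (card_le_of_mem_compressedStd hγ)]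
    exact others.smul_mem _ (Submodule.subset_span ⟨γ, ⟨hsub hγ, hγα⟩, rfl⟩)
  have hmem : inclusionIndicator ℤ (stdSets n i) α ᵥ* W n i j ∈ others := hmap Submodule.mem_top
  rw [inclusionIndicator_vecMul_W hcard] at hmem
  have hzero := (linearIndepOn_compressedStd n j).eq_zero_of_smul_mem_span hα _ hmem
  exact (Nat.choose_pos (Nat.sub_le_sub_right hij α.card)).ne' (mod_cast hzero)

theorem filter_card_le_compressedStd (hij : i ≤ j)
    (hsub : compressedStd n i ⊆ compressedStd n j) :
    (compressedStd n j).filter (·.card ≤ i) = compressedStd n i := by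
  ext α
  rw [Finset.mem_filter]
  exact ⟨fun h => mem_compressedStd_of_card_le hij hsub h.1 h.2,
    fun h => ⟨hsub h, card_le_of_mem_compressedStd h⟩⟩

end InclusionMatrix

section Diagonalization

variable {n i j : ℕ}

/-- The matrix whose row `t` is the function `inclusionIndicator R F (φ t)`. -/
def indicatorMatrix {α ι : Type*} [DecidableEq α] (R : Type*) [Zero R] [One R]
    (F : Finset (Finset α)) (φ : ι → Finset α) : Matrix ι F R :=
  Matrix.of fun t => inclusionIndicator R F (φ t)

lemma isUnit_indicatorMatrix_compressedStd {ι : Type*} [Fintype ι] [DecidableEq ι]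
    {φ : ι → Finset ℕ} (hφ : Set.range φ = compressedStd n j) (e : ι ≃ stdSets n j) :
    IsUnit ((indicatorMatrix ℤ (stdSets n j) φ).submatrix id e) := by
  refine isUnit_submatrix_of_span_row_eq_top ?_ e
  have hrow : (indicatorMatrix ℤ (stdSets n j) φ).row =
      inclusionIndicator ℤ (stdSets n j) ∘ φ := rfl
  rw [hrow, Set.range_comp, hφ, span_compressedStd]

lemma compressedStd_subset_of_le (hij : i ≤ j) (h : 2 * j + min i (j - 1) ≤ n) :
    compressedStd n i ⊆ compressedStd n j := by
  rcases hij.eq_or_lt with rfl | hlt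
  · exact subset_rfl
  · exact compressedStd_subset hij (by omega)

theorem exists_sorted_enumeration_compressedStd {N : ℕ} (hij : i ≤ j)
    (h : 2 * j + min i (j - 1) ≤ n) (hN : (stdSets n j).card = N) :
    ∃ φ : Fin N → Finset ℕ, Set.range φ = compressedStd n j ∧
      ∀ s ≤ i, ∀ t : Fin N, ((t : ℕ) : ℤ) < mu n s ↔ (φ t).card ≤ s := by
  obtain ⟨e, he⟩ := exists_equiv_fin_lt_card_filter_le_iff
    (fun α : compressedStd n j => (α : Finset ℕ).card)
    ((Fintype.card_coe _).trans ((card_compressedStd n j).trans hN))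
  refine ⟨fun t => e t, ?_, fun s hs t => ?_⟩
  · rw [← Function.comp_def, e.surjective.range_comp, Subtype.range_coe]
  · have hcard : (Finset.univ.filter fun α : compressedStd n j => (α : Finset ℕ).card ≤ s).card =
        (stdSets n s).card := by
      rw [← card_compressedStd, ← filter_card_le_compressedStd (hs.trans hij)
        (compressedStd_subset_of_le (hs.trans hij) (by omega)), Finset.card_filter,
        Finset.card_filter]
      exact Finset.sum_coe_sort (compressedStd n j) fun α => if α.card ≤ s then 1 else 0
    rw [← he, hcard, ← card_stdSets (by omega), Nat.cast_lt]

lemma range_comp_castLE {φ : Fin (mu n j).toNat → Finset ℕ} (hij : i ≤ j)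
    (hsub : compressedStd n i ⊆ compressedStd n j) (hle : (mu n i).toNat ≤ (mu n j).toNat)
    (hφ : Set.range φ = compressedStd n j)
    (hcard : ∀ t : Fin _, ((t : ℕ) : ℤ) < mu n i ↔ (φ t).card ≤ i) :
    Set.range (φ ∘ Fin.castLE hle) = compressedStd n i := by
  rw [← filter_card_le_compressedStd hij hsub, Finset.coe_filter]
  ext α
  constructor
  · rintro ⟨t, rfl⟩
    exact ⟨hφ.le ⟨_, rfl⟩, (hcard _).1 (Int.lt_toNat.1 t.2)⟩
  · rintro ⟨hα, hαi⟩
    obtain ⟨u, rfl⟩ := hφ.ge hα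
    exact ⟨⟨u, Int.lt_toNat.2 ((hcard u).2 hαi)⟩, rfl⟩

lemma Dmat_apply_of_eq {c : ℕ} (hc : c ≤ i) {t : Fin (mu n i).toNat} {u : Fin (mu n j).toNat}
    (htu : (t : ℕ) = u) (ht : ∀ s ≤ i, ((t : ℕ) : ℤ) < mu n s ↔ c ≤ s) :
    Dmat n i j t u = (j - c).choose (i - c) := by
  have hblock : ∀ s ≤ i, (mu n ((s : ℤ) - 1) ≤ ((t : ℕ) : ℤ) ∧ ((t : ℕ) : ℤ) < mu n s) ↔
      s = c := by
    intro s hs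
    rw [ht s hs]
    cases s with
    | zero => simp [mu, C, eq_comm]
    | succ s =>
      rw [Nat.cast_add_one, add_sub_cancel_right, ← not_lt, ht s (by omega)]
      omega
  rw [Dmat, Matrix.of_apply, if_pos htu, Finset.sum_congr rfl fun s hs =>
    if_congr (hblock s (Nat.lt_succ_iff.1 (Finset.mem_range.1 hs))) rfl rfl,
    Finset.sum_ite_eq', if_pos (Finset.mem_range.2 (Nat.lt_succ_of_le hc))]

theorem indicatorMatrix_mul_W {φ : Fin (mu n j).toNat → Finset ℕ}
    (hle : (mu n i).toNat ≤ (mu n j).toNat)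
    (hφ : ∀ s ≤ i, ∀ t : Fin _, ((t : ℕ) : ℤ) < mu n s ↔ (φ t).card ≤ s) :
    indicatorMatrix ℤ (stdSets n i) (φ ∘ Fin.castLE hle) * W n i j =
      Dmat n i j * indicatorMatrix ℤ (stdSets n j) φ := by
  ext t β
  have hcard : (φ (Fin.castLE hle t)).card ≤ i := (hφ i le_rfl _).1 (Int.lt_toNat.1 t.2)
  have hdiag : Dmat n i j t (Fin.castLE hle t) = _ :=
    Dmat_apply_of_eq hcard rfl fun s hs => hφ s hs (Fin.castLE hle t)
  have hoff : ∀ u ≠ Fin.castLE hle t, Dmat n i j t u = 0 := fun u hu =>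
    if_neg fun htu => hu (Fin.ext htu.symm)
  rw [Matrix.mul_apply (M := Dmat n i j), Finset.sum_eq_single (Fin.castLE hle t)
    (fun u _ hu => by rw [hoff u hu, zero_mul]) (fun h => absurd (Finset.mem_univ _) h), hdiag]
  exact congrFun (inclusionIndicator_vecMul_W hcard) β

theorem statement9_general (n i j : ℕ) (hij : i ≤ j) (h : 2 * j + min i (j - 1) ≤ n)
    (eI : ↥(stdSets n i) ≃ Fin (mu n i).toNat)
    (eJ : ↥(stdSets n j) ≃ Fin (mu n j).toNat) :
    ∃ (E : Matrix (Fin (mu n i).toNat) (Fin (mu n i).toNat) ℤ)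
      (F : Matrix (Fin (mu n j).toNat) (Fin (mu n j).toNat) ℤ),
      (E.det = 1 ∨ E.det = -1) ∧ (F.det = 1 ∨ F.det = -1) ∧
      E * (Matrix.of fun t u => W n i j (eI.symm t) (eJ.symm u)) * F = Dmat n i j := by
  have hNi : (stdSets n i).card = (mu n i).toNat := by simpa using Fintype.card_congr eI
  have hNj : (stdSets n j).card = (mu n j).toNat := by simpa using Fintype.card_congr eJ
  have hsub := compressedStd_subset_of_le hij h
  have hle : (mu n i).toNat ≤ (mu n j).toNat := by
    rw [← hNi, ← hNj, ← card_compressedStd, ← card_compressedStd]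
    exact Finset.card_le_card hsub
  obtain ⟨φ, hφ, hcard⟩ := exists_sorted_enumeration_compressedStd hij h hNj
  have hφi := range_comp_castLE hij hsub hle hφ (hcard i le_rfl)
  let P := (indicatorMatrix ℤ (stdSets n i) (φ ∘ Fin.castLE hle)).submatrix id eI.symm
  let Q := (indicatorMatrix ℤ (stdSets n j) φ).submatrix id eJ.symm
  have hP : IsUnit P.det :=
    (Matrix.isUnit_iff_isUnit_det P).1 (isUnit_indicatorMatrix_compressedStd hφi eI.symm)
  have hQ : IsUnit Q.det :=
    (Matrix.isUnit_iff_isUnit_det Q).1 (isUnit_indicatorMatrix_compressedStd hφ eJ.symm)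
  have hPW : P * (W n i j).submatrix eI.symm eJ.symm = Dmat n i j * Q := by
    rw [Matrix.submatrix_mul_equiv, indicatorMatrix_mul_W hle hcard]
    rfl
  refine ⟨P, Q⁻¹, Int.isUnit_iff.1 hP, Int.isUnit_iff.1 (Q.isUnit_nonsing_inv_det hQ), ?_⟩
  exact (congrArg (· * Q⁻¹) hPW).trans (Matrix.mul_nonsing_inv_cancel_right _ _ hQ)

end Diagonalization

/-- Under any identification of the standard `i`- resp. `j`-subsets with
`{0,…,μ_i−1}` resp. `{0,…,μ_j−1}`, there are unimodular `E`, `F` with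
`E · W_{i,j} · F = D_{i,j}`. -/
theorem statement9 (n i j : ℕ) (hij : i ≤ j) (h : 3 * j ≤ n + 1)
    (eI : ↥(stdSets n i) ≃ Fin (mu n i).toNat)
    (eJ : ↥(stdSets n j) ≃ Fin (mu n j).toNat) :
    ∃ (E : Matrix (Fin (mu n i).toNat) (Fin (mu n i).toNat) ℤ)
      (F : Matrix (Fin (mu n j).toNat) (Fin (mu n j).toNat) ℤ),
      (E.det = 1 ∨ E.det = -1) ∧ (F.det = 1 ∨ F.det = -1) ∧
      E * (Matrix.of fun t u => W n i j (eI.symm t) (eJ.symm u)) * F = Dmat n i j :=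
  statement9_general n i j hij (by omega) eI eJ
end

section
/- Let n ≥ 5 be an integer. Then the Smith group of the adjacency matrix of the Johnson graph J(n,2) satisfies S(A_{n,2,2,1}) ≅ (ℤ/2ℤ)^{(n−2)(n−3)/2} ⊕ ℤ/(n−2)(n−4)ℤ ⊕ (ℤ/2(n−4)ℤ)^{n−2}. -/
open scoped Classical

/-- The subset intersection matrix `A_{n,kr,kc,ℓ}`; `A_{n,2,2,1}` is the adjacency
matrix of the Johnson graph `J(n,2)`. -/
noncomputable def interMat (n kr kc ℓ : ℕ) :
    Matrix ↥(ksubsets n kr) ↥(ksubsets n kc) ℤ :=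
  Matrix.of fun A B => if ((A : Finset ℕ) ∩ (B : Finset ℕ)).card = ℓ then 1 else 0

/-- The Smith group of an integer matrix. -/
abbrev SmithGroup {ρ γ : Type*} (M : Matrix ρ γ ℤ) : Type _ :=
  (γ → ℤ) ⧸ Submodule.span ℤ (Set.range fun r : ρ => M r)

/-!
Single out a vertex `a` of the complete graph on `{1,…,n}`. With `s` the sum of the generators of
the Smith group over the edges through `a`, `yᵢ = g{a,i} - s` and
`f{i,j} = g{i,j} - g{a,i} - g{a,j} + s`, the rows of the adjacency matrix become `2 f = 0`,
`∑ yᵢ = (2 - n) s` and `∑ⱼ f{i,j} = (4 - n) yᵢ`. For a second vertex `b`, the last two relations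
express `y_b` and all `f{b,i}` through the coordinates supported on the other `n - 2` vertices, and
what is left on those is `2 f = 0`, `(n - 2) (n - 4) s = 0` and `2 (n - 4) yᵢ = 0`. The elimination
is reversible, so these relations present the Smith group as a direct sum of cyclic groups.
-/

open Finset

section Hom

theorem prodHom_ext {A B C : Type*} [AddCommMonoid A] [AddZeroClass B] [AddZeroClass C]
    {φ ψ : B × C →+ A} (hl : φ.comp (.inl B C) = ψ.comp (.inl B C))
    (hr : φ.comp (.inr B C) = ψ.comp (.inr B C)) : φ = ψ := by
  rw [← AddMonoidHom.coprod_unique φ, hl, hr, AddMonoidHom.coprod_unique]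

variable {A ι : Type*} [AddCommGroup A]

theorem exists_zmodHom_one {m : ℕ} {x : A} (hx : m • x = 0) : ∃ φ : ZMod m →+ A, φ 1 = x := by
  refine ⟨ZMod.lift m ⟨zmultiplesHom A x, by simpa using hx⟩, ?_⟩
  rw [← Int.cast_one, ZMod.lift_coe]
  simp

theorem zmodHom_ext {m : ℕ} {φ ψ : ZMod m →+ A} (h : φ 1 = ψ 1) : φ = ψ := by
  ext x
  obtain ⟨k, rfl⟩ := ZMod.intCast_surjective x
  rw [← zsmul_one, map_zsmul, map_zsmul, h]

theorem exists_piZModHom_single [Finite ι] [DecidableEq ι] {m : ℕ} {x : ι → A}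
    (hx : ∀ i, m • x i = 0) :
    ∃ φ : (ι → ZMod m) →+ A, ∀ i, φ (Pi.single i 1) = x i := by
  cases nonempty_fintype ι
  choose φ hφ using fun i => exists_zmodHom_one (hx i)
  refine ⟨∑ i, (φ i).comp (Pi.evalAddMonoidHom _ i), fun i => ?_⟩
  rw [AddMonoidHom.finsetSum_apply, Fintype.sum_eq_single i fun j hj => by simp [hj]]
  simp [hφ]

theorem piZModHom_ext [Finite ι] [DecidableEq ι] {m : ℕ} {φ ψ : (ι → ZMod m) →+ A}
    (h : ∀ i, φ (Pi.single i 1) = ψ (Pi.single i 1)) : φ = ψ :=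
  AddMonoidHom.functions_ext' _ _ _ fun i => zmodHom_ext (h i)

end Hom

section VertexSum

variable {α A : Type*} [AddCommGroup A]

theorem sum_add_const_of_card_eq_two {S : Finset α} (hS : #S = 2) (x : α → A) (s : A) :
    ∑ i ∈ S, (x i + s) = ∑ i ∈ S, x i + (2 : ℤ) • s := by
  rw [sum_add_distrib, sum_const, hS, ← natCast_zsmul, Nat.cast_ofNat]

variable [DecidableEq α] {U V : Finset α} {a i : α} {g : Finset α → A}

theorem forall_mem_powersetCard_two_insert (ha : a ∉ U) {P : Finset α → Prop} :
    (∀ S ∈ (insert a U).powersetCard 2, P S) ↔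
      (∀ i ∈ U, P {a, i}) ∧ ∀ S ∈ U.powersetCard 2, P S := by
  rw [powersetCard_succ_insert ha, powersetCard_one]
  simp only [mem_union, mem_image, mem_map, Function.Embedding.coeFn_mk]
  constructor
  · exact fun h => ⟨fun i hi => h _ (.inr ⟨{i}, ⟨i, hi, rfl⟩, rfl⟩), fun S hS => h S (.inl hS)⟩
  · rintro ⟨hstar, hU⟩ S (hS | ⟨_, ⟨i, hi, rfl⟩, rfl⟩)
    exacts [hU S hS, hstar i hi]

theorem sum_powersetCard_two_insert (ha : a ∉ U) (g : Finset α → A) :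
    ∑ S ∈ (insert a U).powersetCard 2, g S = ∑ i ∈ U, g {a, i} + ∑ S ∈ U.powersetCard 2, g S := by
  rw [powersetCard_succ_insert ha, powersetCard_one, sum_union, sum_image, sum_map, add_comm]
  · rfl
  · intro S hS T hT h
    simp only [coe_map, Function.Embedding.coeFn_mk, Set.mem_image, mem_coe] at hS hT
    obtain ⟨i, hi, rfl⟩ := hS
    obtain ⟨j, hj, rfl⟩ := hT
    have hai : a ∉ ({i} : Finset α) := by grind
    have haj : a ∉ ({j} : Finset α) := by grind
    rw [← erase_insert hai, h, erase_insert haj]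
  · rw [disjoint_left]
    intro S hS hS'
    obtain ⟨T, -, rfl⟩ := mem_image.1 hS'
    exact ha ((mem_powersetCard.1 hS).1 (mem_insert_self a T))

/-- The sum of the weights `g S` of the edges (two-element subsets) `S ⊆ V` through `i`. -/
def vertexSum (V : Finset α) (g : Finset α → A) (i : α) : A :=
  ∑ S ∈ V.powersetCard 2 with i ∈ S, g S

theorem vertexSum_insert_self (ha : a ∉ U) (g : Finset α → A) :
    vertexSum (insert a U) g a = ∑ i ∈ U, g {a, i} := by
  rw [vertexSum, sum_filter, sum_powersetCard_two_insert ha]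
  have hU : ∑ S ∈ U.powersetCard 2, (if a ∈ S then g S else 0) = 0 :=
    sum_eq_zero fun S hS => if_neg fun h => ha ((mem_powersetCard.1 hS).1 h)
  simp [hU]

theorem vertexSum_insert_of_mem (ha : a ∉ U) (hi : i ∈ U) (g : Finset α → A) :
    vertexSum (insert a U) g i = g {a, i} + vertexSum U g i := by
  rw [vertexSum, sum_filter, sum_powersetCard_two_insert ha, ← sum_filter, ← sum_filter, vertexSum]
  have hfilter : {j ∈ U | i ∈ ({a, j} : Finset α)} = {i} := by grind
  rw [hfilter, sum_singleton]

theorem vertexSum_congr {g h : Finset α → A} (H : ∀ S ∈ V.powersetCard 2, g S = h S) (i : α) :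
    vertexSum V g i = vertexSum V h i :=
  sum_congr rfl fun S hS => H S (mem_filter.1 hS).1

theorem map_vertexSum {B : Type*} [AddCommGroup B] (φ : A →+ B) (g : Finset α → A) :
    φ (vertexSum V g i) = vertexSum V (φ ∘ g) i :=
  map_sum φ _ _

theorem sum_vertexSum (V S : Finset α) (g : Finset α → A) :
    ∑ i ∈ S, vertexSum V g i = ∑ T ∈ V.powersetCard 2, #(S ∩ T) • g T := by
  simp only [vertexSum, sum_filter]
  rw [sum_comm]
  refine sum_congr rfl fun T _ => ?_
  rw [← sum_filter, filter_mem_eq_inter, sum_const]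

theorem sum_vertexSum_eq_zero (h : ∀ S ∈ V.powersetCard 2, (2 : ℤ) • g S = 0) :
    ∑ i ∈ V, vertexSum V g i = 0 := by
  rw [sum_vertexSum]
  refine sum_eq_zero fun S hS => ?_
  rw [inter_eq_right.2 (mem_powersetCard.1 hS).1, (mem_powersetCard.1 hS).2, ← natCast_zsmul]
  exact h S hS

theorem zsmul_vertexSum_eq_zero {k : ℤ} (h : ∀ S ∈ V.powersetCard 2, k • g S = 0) (i : α) :
    k • vertexSum V g i = 0 := by
  rw [vertexSum, smul_sum]
  exact sum_eq_zero fun S hS => h S (mem_filter.1 hS).1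

theorem vertexSum_add_sum_add_const (hi : i ∈ U) (r : Finset α → A) (x : α → A) (s : A) :
    vertexSum U (fun S => r S + ∑ j ∈ S, x j + s) i =
      vertexSum U r i + ((#U : ℤ) - 2) • x i + ∑ j ∈ U, x j + ((#U : ℤ) - 1) • s := by
  obtain ⟨W, hiW, rfl⟩ : ∃ W, i ∉ W ∧ insert i W = U :=
    ⟨U.erase i, notMem_erase i U, insert_erase hi⟩
  have hpair : ∀ j ∈ W, ∑ k ∈ {i, j}, x k = x i + x j := fun j hj =>
    sum_pair fun h => hiW (h ▸ hj)
  rw [vertexSum_insert_self hiW, vertexSum_insert_self hiW, sum_add_distrib, sum_add_distrib,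
    sum_congr rfl hpair, sum_add_distrib, sum_const, sum_const, sum_insert hiW,
    card_insert_of_notMem hiW, ← natCast_zsmul, ← natCast_zsmul]
  push_cast
  module

/-- A weight on the edges contained in `V` that is annihilated by the adjacency matrix of the
Johnson graph on these edges. The matrix is written as the transposed incidence matrix times the
incidence matrix, minus `2`; see `isJohnsonWeight_iff`. -/
def IsJohnsonWeight (V : Finset α) (g : Finset α → A) : Prop :=
  ∀ S ∈ V.powersetCard 2, (2 : ℤ) • g S = ∑ i ∈ S, vertexSum V g i

theorem isJohnsonWeight_iff :
    IsJohnsonWeight V g ↔ ∀ S ∈ V.powersetCard 2,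
      ∑ T ∈ V.powersetCard 2, (if #(S ∩ T) = 1 then 1 else 0 : ℤ) • g T = 0 := by
  refine forall₂_congr fun S hS => ?_
  have hcoeff : ∀ T ∈ V.powersetCard 2,
      #(S ∩ T) • g T = (if #(S ∩ T) = 1 then 1 else 0 : ℤ) • g T +
        if S = T then (2 : ℤ) • g T else 0 := fun T hT => by
    have hcardS := (mem_powersetCard.1 hS).2
    have hcardT := (mem_powersetCard.1 hT).2
    obtain rfl | hST := eq_or_ne S T
    · simp [hcardS, ofNat_zsmul]
    · have hlt : #(S ∩ T) < 2 := hcardS ▸ card_lt_card (inter_subset_left.ssubset_of_ne fun h =>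
        hST (eq_of_subset_of_card_le (inter_eq_left.1 h) (by omega)))
      interval_cases #(S ∩ T) <;> simp [hST]
  rw [sum_vertexSum, sum_congr rfl hcoeff, sum_add_distrib, sum_ite_eq, if_pos hS, right_eq_add]

end VertexSum

/-- Coordinates for a weight on the edges of a wheel: the hub is a base point `a`, and there is one
`spoke` for each other vertex and one `rim` value for each edge that avoids `a`. -/
structure WheelCoords (α A : Type*) where
  hub : A
  spoke : α → A
  rim : Finset α → A

namespace WheelCoords

variable {α A : Type*} {c c' c'' : WheelCoords α A} {U W : Finset α}

/-- Equality of the coordinates supported on the vertex set `W`; the functions `spoke` and `rim` may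
differ elsewhere. -/
structure AgreeOn (c c' : WheelCoords α A) (W : Finset α) : Prop where
  hub : c.hub = c'.hub
  spoke : ∀ i ∈ W, c.spoke i = c'.spoke i
  rim : ∀ S ∈ W.powersetCard 2, c.rim S = c'.rim S

theorem AgreeOn.symm (h : c.AgreeOn c' W) : c'.AgreeOn c W :=
  ⟨h.hub.symm, fun i hi => (h.spoke i hi).symm, fun S hS => (h.rim S hS).symm⟩

theorem AgreeOn.trans (h : c.AgreeOn c' W) (h' : c'.AgreeOn c'' W) : c.AgreeOn c'' W :=
  ⟨h.hub.trans h'.hub, fun i hi => (h.spoke i hi).trans (h'.spoke i hi),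
    fun S hS => (h.rim S hS).trans (h'.rim S hS)⟩

theorem AgreeOn.mono (h : c.AgreeOn c' U) (hWU : W ⊆ U) : c.AgreeOn c' W :=
  ⟨h.hub, fun i hi => h.spoke i (hWU hi), fun S hS => h.rim S (powersetCard_mono hWU hS)⟩

variable [AddCommGroup A] {B : Type*} [AddCommGroup B]

/-- The image of coordinates under a group homomorphism. -/
def map (φ : A →+ B) (c : WheelCoords α A) : WheelCoords α B :=
  ⟨φ c.hub, φ ∘ c.spoke, φ ∘ c.rim⟩

theorem AgreeOn.map (h : c.AgreeOn c' W) (φ : A →+ B) : (c.map φ).AgreeOn (c'.map φ) W :=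
  ⟨congrArg φ h.hub, fun i hi => congrArg φ (h.spoke i hi), fun S hS => congrArg φ (h.rim S hS)⟩

/-- The relations left over on `W` when a Johnson weight on a set with two more vertices is written
in wheel coordinates and everything involving these two vertices is eliminated. -/
structure IsReduced (c : WheelCoords α A) (W : Finset α) : Prop where
  two_smul_rim : ∀ S ∈ W.powersetCard 2, (2 : ℤ) • c.rim S = 0
  smul_hub : (#W * (#W - 2) : ℤ) • c.hub = 0
  smul_spoke : ∀ i ∈ W, (2 * (#W - 2) : ℤ) • c.spoke i = 0

theorem AgreeOn.isReduced (h : c.AgreeOn c' W) (hc : c.IsReduced W) : c'.IsReduced W where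
  two_smul_rim S hS := h.rim S hS ▸ hc.two_smul_rim S hS
  smul_hub := h.hub ▸ hc.smul_hub
  smul_spoke i hi := h.spoke i hi ▸ hc.smul_spoke i hi

/-- The group with generators a hub, the spokes and the rim edges of `W`, subject to the relations
`IsReduced`. -/
abbrev ReducedGroup (W : Finset α) : Type _ :=
  (↥(W.powersetCard 2) → ZMod 2) × ZMod (#W * (#W - 2) : ℤ).natAbs ×
    (↥W → ZMod (2 * (#W - 2) : ℤ).natAbs)

theorem ReducedGroup.nonempty_addEquiv_fin {m : ℕ} (hW : #W = m) :
    Nonempty (ReducedGroup W ≃+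
      (Fin (m.choose 2) → ZMod 2) × ZMod (m * (m - 2) : ℤ).natAbs ×
        (Fin m → ZMod (2 * (m - 2) : ℤ).natAbs)) := by
  subst hW
  exact ⟨.prodCongr (.arrowCongr (equivFinOfCardEq (card_powersetCard 2 W)) (.refl _))
    (.prodCongr (.refl _) (.arrowCongr W.equivFin (.refl _)))⟩

variable [DecidableEq α] {a b i : α} {g : Finset α → A}

/-- The weight `g` on the edges contained in `insert a U` has wheel coordinates `c` with hub `a`. -/
structure Represents (c : WheelCoords α A) (a : α) (U : Finset α) (g : Finset α → A) : Prop where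
  star : ∀ i ∈ U, g {a, i} = c.spoke i + c.hub
  edge : ∀ S ∈ U.powersetCard 2, g S = c.rim S + ∑ i ∈ S, c.spoke i + c.hub

/-- The relations between the wheel coordinates of a Johnson weight on `insert a U`. -/
structure IsJohnson (c : WheelCoords α A) (U : Finset α) : Prop where
  two_smul_rim : ∀ S ∈ U.powersetCard 2, (2 : ℤ) • c.rim S = 0
  sum_spoke : ∑ i ∈ U, c.spoke i = (1 - #U : ℤ) • c.hub
  vertexSum_rim : ∀ i ∈ U, vertexSum U c.rim i = (3 - #U : ℤ) • c.spoke i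

theorem Represents.congr (ha : a ∉ U) (h : c.Represents a U g) {g' : Finset α → A}
    (hg : ∀ S ∈ (insert a U).powersetCard 2, g' S = g S) : c.Represents a U g' := by
  obtain ⟨hstar, hedge⟩ := (forall_mem_powersetCard_two_insert ha).1 hg
  exact ⟨fun i hi => (hstar i hi).trans (h.star i hi), fun S hS => (hedge S hS).trans (h.edge S hS)⟩

theorem Represents.vertexSum_hub (ha : a ∉ U) (h : c.Represents a U g)
    (hsum : ∑ i ∈ U, c.spoke i = (1 - #U : ℤ) • c.hub) :
    vertexSum (insert a U) g a = c.hub := by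
  rw [vertexSum_insert_self ha, sum_congr rfl h.star, sum_add_distrib, hsum, sum_const,
    ← natCast_zsmul]
  module

theorem Represents.vertexSum_of_mem (ha : a ∉ U) (h : c.Represents a U g)
    (hsum : ∑ i ∈ U, c.spoke i = (1 - #U : ℤ) • c.hub) (hi : i ∈ U) :
    vertexSum (insert a U) g i =
      vertexSum U c.rim i + (#U - 1 : ℤ) • c.spoke i + c.hub := by
  rw [vertexSum_insert_of_mem ha hi, h.star i hi, vertexSum_congr h.edge,
    vertexSum_add_sum_add_const hi, hsum]
  module

theorem Represents.isJohnsonWeight_iff (ha : a ∉ U) (h : c.Represents a U g)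
    (hsum : ∑ i ∈ U, c.spoke i = (1 - #U : ℤ) • c.hub) :
    IsJohnsonWeight (insert a U) g ↔ c.IsJohnson U := by
  have hstar : ∀ i ∈ U, (2 : ℤ) • g {a, i} = ∑ j ∈ {a, i}, vertexSum (insert a U) g j ↔
      vertexSum U c.rim i = (3 - #U : ℤ) • c.spoke i := fun i hi => by
    rw [sum_pair (ne_of_mem_of_not_mem hi ha).symm, h.vertexSum_hub ha hsum,
      h.vertexSum_of_mem ha hsum hi, h.star i hi]
    constructor <;> intro h <;> linear_combination (norm := module) -h
  have hedge (hrim : ∀ i ∈ U, vertexSum U c.rim i = (3 - #U : ℤ) • c.spoke i) :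
      ∀ S ∈ U.powersetCard 2, (2 : ℤ) • g S = ∑ i ∈ S, vertexSum (insert a U) g i ↔
        (2 : ℤ) • c.rim S = 0 := fun S hS => by
    have hvertex : ∀ i ∈ S, vertexSum (insert a U) g i = (2 : ℤ) • c.spoke i + c.hub :=
        fun i hi => by
      have hiU := (mem_powersetCard.1 hS).1 hi
      rw [h.vertexSum_of_mem ha hsum hiU, hrim i hiU]
      module
    rw [sum_congr rfl hvertex, sum_add_const_of_card_eq_two (mem_powersetCard.1 hS).2, ← smul_sum,
      h.edge S hS]
    constructor <;> intro h <;> linear_combination (norm := module) h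
  rw [IsJohnsonWeight, forall_mem_powersetCard_two_insert ha]
  constructor
  · rintro ⟨h₁, h₂⟩
    have hrim := fun i hi => (hstar i hi).1 (h₁ i hi)
    exact ⟨fun S hS => (hedge hrim S hS).1 (h₂ S hS), hsum, hrim⟩
  · intro hc
    exact ⟨fun i hi => (hstar i hi).2 (hc.vertexSum_rim i hi),
      fun S hS => (hedge hc.vertexSum_rim S hS).2 (hc.two_smul_rim S hS)⟩

theorem Represents.mem_of_coords_mem (ha : a ∉ U) (h : c.Represents a U g) {K : AddSubgroup A}
    (hhub : c.hub ∈ K) (hspoke : ∀ i ∈ U, c.spoke i ∈ K)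
    (hrim : ∀ S ∈ U.powersetCard 2, c.rim S ∈ K) :
    ∀ S ∈ (insert a U).powersetCard 2, g S ∈ K := by
  refine (forall_mem_powersetCard_two_insert ha).2 ⟨fun i hi => ?_, fun S hS => ?_⟩
  · rw [h.star i hi]
    exact add_mem (hspoke i hi) hhub
  · rw [h.edge S hS]
    exact add_mem (add_mem (hrim S hS)
      (sum_mem fun i hi => hspoke i ((mem_powersetCard.1 hS).1 hi))) hhub

theorem exists_represents (ha : a ∉ U) (c : WheelCoords α A) : ∃ g, c.Represents a U g := by
  refine ⟨fun S => if a ∈ S then ∑ i ∈ S.erase a, c.spoke i + c.hub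
    else c.rim S + ∑ i ∈ S, c.spoke i + c.hub, fun i hi => ?_, fun S hS => ?_⟩
  · have hai : a ∉ ({i} : Finset α) := by grind
    rw [if_pos (mem_insert_self a {i}), erase_insert hai, sum_singleton]
  · rw [if_neg fun h => ha ((mem_powersetCard.1 hS).1 h)]

/-- The wheel coordinates of a Johnson weight `g` on `insert a U`; by `Represents.vertexSum_hub` the
hub coordinate has to be the vertex sum at `a`. -/
def ofWeight (a : α) (U : Finset α) (g : Finset α → A) : WheelCoords α A where
  hub := vertexSum (insert a U) g a
  spoke i := g {a, i} - vertexSum (insert a U) g a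
  rim S := g S - ∑ i ∈ S, g {a, i} + vertexSum (insert a U) g a

theorem map_ofWeight (φ : A →+ B) (a : α) (U : Finset α) (g : Finset α → A) :
    (ofWeight a U g).map φ = ofWeight a U (φ ∘ g) := by
  simp [map, ofWeight, map_vertexSum, Function.comp_def]

theorem represents_ofWeight (a : α) (U : Finset α) (g : Finset α → A) :
    (ofWeight a U g).Represents a U g where
  star i _ := (sub_add_cancel _ _).symm
  edge S hS := by
    simp only [ofWeight, sub_eq_add_neg]
    rw [sum_add_const_of_card_eq_two (mem_powersetCard.1 hS).2]
    module

theorem isJohnson_ofWeight (ha : a ∉ U) (hg : IsJohnsonWeight (insert a U) g) :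
    (ofWeight a U g).IsJohnson U := by
  refine ((represents_ofWeight a U g).isJohnsonWeight_iff ha ?_).1 hg
  simp only [ofWeight, vertexSum_insert_self ha]
  rw [sum_sub_distrib, sum_const, ← natCast_zsmul]
  module

theorem Represents.agreeOn_ofWeight (ha : a ∉ U) (h : c.Represents a U g)
    (hsum : ∑ i ∈ U, c.spoke i = (1 - #U : ℤ) • c.hub) :
    (ofWeight a U g).AgreeOn c U := by
  have hhub : (ofWeight a U g).hub = c.hub := h.vertexSum_hub ha hsum
  have hspoke : ∀ i ∈ U, (ofWeight a U g).spoke i = c.spoke i := fun i hi => by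
    have := ((represents_ofWeight a U g).star i hi).symm.trans (h.star i hi)
    rwa [hhub, add_left_inj] at this
  refine ⟨hhub, hspoke, fun S hS => ?_⟩
  have := ((represents_ofWeight a U g).edge S hS).symm.trans (h.edge S hS)
  rwa [hhub, sum_congr rfl fun i hi => hspoke i ((mem_powersetCard.1 hS).1 hi),
    add_left_inj, add_left_inj] at this

theorem IsJohnson.spoke_eq (hb : b ∉ W) (hc : c.IsJohnson (insert b W)) :
    c.spoke b = -∑ i ∈ W, c.spoke i - (#W : ℤ) • c.hub := by
  have hsum := hc.sum_spoke
  rw [sum_insert hb, card_insert_of_notMem hb, Nat.cast_succ] at hsum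
  linear_combination (norm := module) hsum

theorem IsJohnson.rim_eq (hb : b ∉ W) (hc : c.IsJohnson (insert b W)) (hi : i ∈ W) :
    c.rim {b, i} = (2 - #W : ℤ) • c.spoke i - vertexSum W c.rim i := by
  have hvertex := hc.vertexSum_rim i (mem_insert_of_mem hi)
  rw [vertexSum_insert_of_mem hb hi, card_insert_of_notMem hb, Nat.cast_succ] at hvertex
  linear_combination (norm := module) hvertex

theorem sum_rim_eq (hrim : ∀ S ∈ W.powersetCard 2, (2 : ℤ) • c.rim S = 0)
    (hrim_b : ∀ i ∈ W, c.rim {b, i} = (2 - #W : ℤ) • c.spoke i - vertexSum W c.rim i) :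
    ∑ i ∈ W, c.rim {b, i} = (2 - #W : ℤ) • ∑ i ∈ W, c.spoke i := by
  rw [sum_congr rfl hrim_b, sum_sub_distrib, ← smul_sum, sum_vertexSum_eq_zero hrim, sub_zero]

theorem IsJohnson.isReduced (hb : b ∉ W) (hc : c.IsJohnson (insert b W)) : c.IsReduced W := by
  obtain ⟨hrim_insert, hrim⟩ := (forall_mem_powersetCard_two_insert hb).1 hc.two_smul_rim
  have hspoke : ∀ i ∈ W, (2 * (#W - 2) : ℤ) • c.spoke i = 0 := fun i hi => by
    have htwo := hrim_insert i hi
    rw [hc.rim_eq hb hi] at htwo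
    linear_combination (norm := module) -htwo - zsmul_vertexSum_eq_zero hrim i
  have hsum_spoke : (2 * (#W - 2) : ℤ) • ∑ i ∈ W, c.spoke i = 0 := by
    rw [smul_sum]
    exact sum_eq_zero hspoke
  have hvertex := hc.vertexSum_rim b (mem_insert_self b W)
  rw [vertexSum_insert_self hb, sum_rim_eq hrim fun i hi => hc.rim_eq hb hi, hc.spoke_eq hb,
    card_insert_of_notMem hb, Nat.cast_succ] at hvertex
  exact ⟨hrim, by linear_combination (norm := module) -hvertex - hsum_spoke, hspoke⟩

theorem IsReduced.isJohnson_insert (hb : b ∉ W) (hc : c.IsReduced W)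
    (hspoke_b : c.spoke b = -∑ i ∈ W, c.spoke i - (#W : ℤ) • c.hub)
    (hrim_b : ∀ i ∈ W, c.rim {b, i} = (2 - #W : ℤ) • c.spoke i - vertexSum W c.rim i) :
    c.IsJohnson (insert b W) := by
  have hcard : (#(insert b W) : ℤ) = #W + 1 := by
    rw [card_insert_of_notMem hb, Nat.cast_succ]
  have hsum_spoke : (2 * (#W - 2) : ℤ) • ∑ i ∈ W, c.spoke i = 0 := by
    rw [smul_sum]
    exact sum_eq_zero hc.smul_spoke
  refine ⟨(forall_mem_powersetCard_two_insert hb).2 ⟨fun i hi => ?_, hc.two_smul_rim⟩, ?_,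
    (forall_mem_insert _ _ _).2 ⟨?_, fun i hi => ?_⟩⟩
  · rw [hrim_b i hi]
    linear_combination (norm := module)
      -hc.smul_spoke i hi - zsmul_vertexSum_eq_zero hc.two_smul_rim i
  · rw [sum_insert hb, hspoke_b, hcard]
    module
  · rw [vertexSum_insert_self hb, sum_rim_eq hc.two_smul_rim hrim_b, hcard, hspoke_b]
    linear_combination (norm := module) -hsum_spoke - hc.smul_hub
  · rw [vertexSum_insert_of_mem hb hi, hrim_b i hi, hcard]
    module

theorem IsReduced.exists_isJohnson_insert (hb : b ∉ W) (hc : c.IsReduced W) :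
    ∃ c' : WheelCoords α A, c'.IsJohnson (insert b W) ∧ c'.AgreeOn c W := by
  let c' : WheelCoords α A :=
    { hub := c.hub
      spoke := Function.update c.spoke b (-∑ i ∈ W, c.spoke i - (#W : ℤ) • c.hub)
      rim S := if b ∈ S then
          ∑ i ∈ S.erase b, ((2 - #W : ℤ) • c.spoke i - vertexSum W c.rim i)
        else c.rim S }
  have hagree : c'.AgreeOn c W :=
    ⟨rfl, fun i hi => Function.update_of_ne (ne_of_mem_of_not_mem hi hb) _ _,
      fun S hS => if_neg fun h => hb ((mem_powersetCard.1 hS).1 h)⟩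
  refine ⟨c', (hagree.symm.isReduced hc).isJohnson_insert hb ?_ fun i hi => ?_, hagree⟩
  · rw [sum_congr rfl hagree.spoke]
    exact Function.update_self ..
  · have hbi : b ∉ ({i} : Finset α) := by grind
    rw [vertexSum_congr hagree.rim, hagree.spoke i hi]
    simp only [c', mem_insert_self, if_true, erase_insert hbi, sum_singleton]

theorem IsJohnson.spoke_mem_and_rim_mem (hb : b ∉ W) (hc : c.IsJohnson (insert b W))
    {K : AddSubgroup A} (hhub : c.hub ∈ K) (hspoke : ∀ i ∈ W, c.spoke i ∈ K)
    (hrim : ∀ S ∈ W.powersetCard 2, c.rim S ∈ K) :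
    (∀ i ∈ insert b W, c.spoke i ∈ K) ∧ ∀ S ∈ (insert b W).powersetCard 2, c.rim S ∈ K := by
  refine ⟨(forall_mem_insert _ _ _).2 ⟨?_, hspoke⟩,
    (forall_mem_powersetCard_two_insert hb).2 ⟨fun i hi => ?_, hrim⟩⟩
  · rw [hc.spoke_eq hb]
    exact sub_mem (neg_mem (sum_mem hspoke)) (zsmul_mem hhub _)
  · rw [hc.rim_eq hb hi]
    exact sub_mem (zsmul_mem (hspoke i hi) _)
      (sum_mem fun S hS => hrim S (mem_filter.1 hS).1)

/-- The generators of `ReducedGroup W`; coordinates not supported on `W` are `0`. -/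
noncomputable def universal (W : Finset α) : WheelCoords α (ReducedGroup W) where
  hub := (0, 1, 0)
  spoke := Function.extend Subtype.val (fun i => (0, 0, Pi.single i 1)) 0
  rim := Function.extend Subtype.val (fun S => (Pi.single S 1, 0, 0)) 0

theorem universal_spoke (i : ↥W) : (universal W).spoke i = (0, 0, Pi.single i 1) :=
  Subtype.val_injective.extend_apply (fun i : ↥W => ((0, 0, Pi.single i 1) : ReducedGroup W)) 0 i

theorem universal_rim (S : ↥(W.powersetCard 2)) : (universal W).rim S = (Pi.single S 1, 0, 0) :=
  Subtype.val_injective.extend_apply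
    (fun S : ↥(W.powersetCard 2) => ((Pi.single S 1, 0, 0) : ReducedGroup W)) 0 S

theorem isReduced_universal : (universal W).IsReduced W where
  two_smul_rim S hS := by
    rw [universal_rim ⟨S, hS⟩, ofNat_zsmul, Prod.smul_mk, ← Pi.single_smul]
    simp [CharTwo.two_eq_zero]
  smul_hub := by
    rw [← natAbs_nsmul_eq_zero]
    simp only [universal, Prod.smul_mk, smul_zero, nsmul_one, ZMod.natCast_self, Prod.mk_zero_zero]
  smul_spoke i hi := by
    rw [← natAbs_nsmul_eq_zero, universal_spoke ⟨i, hi⟩, Prod.smul_mk, Prod.smul_mk,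
      ← Pi.single_smul]
    simp only [smul_zero, nsmul_one, ZMod.natCast_self, Pi.single_zero, Prod.mk_zero_zero]

theorem IsReduced.exists_hom (hc : c.IsReduced W) :
    ∃ ψ : ReducedGroup W →+ A, ((universal W).map ψ).AgreeOn c W := by
  obtain ⟨rim, hrim⟩ := exists_piZModHom_single fun S : ↥(W.powersetCard 2) =>
    (ofNat_zsmul (c.rim S) 2).symm.trans (hc.two_smul_rim S S.2)
  obtain ⟨hub, hhub⟩ := exists_zmodHom_one (natAbs_nsmul_eq_zero.2 hc.smul_hub)
  obtain ⟨spoke, hspoke⟩ := exists_piZModHom_single fun i : ↥W =>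
    natAbs_nsmul_eq_zero.2 (hc.smul_spoke i i.2)
  refine ⟨rim.coprod (hub.coprod spoke), ?_, fun i hi => ?_, fun S hS => ?_⟩
  · simp [map, universal, hhub]
  · simp [map, universal_spoke ⟨i, hi⟩, hspoke]
  · simp [map, universal_rim ⟨S, hS⟩, hrim]

theorem hom_ext {φ ψ : ReducedGroup W →+ A}
    (h : ((universal W).map φ).AgreeOn ((universal W).map ψ) W) : φ = ψ := by
  refine prodHom_ext (piZModHom_ext fun S => ?_)
    (prodHom_ext (zmodHom_ext h.hub) (piZModHom_ext fun i => ?_))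
  · have hS : φ ((universal W).rim S) = ψ ((universal W).rim S) := h.rim S S.2
    rwa [universal_rim] at hS
  · have hi : φ ((universal W).spoke i) = ψ ((universal W).spoke i) := h.spoke i i.2
    rwa [universal_spoke] at hi

end WheelCoords

section UniversalJohnsonWeight

open WheelCoords

universe u v

variable {α : Type u} {A : Type v} [DecidableEq α] [AddCommGroup A] {V W : Finset α} {a b : α}
  {g : Finset α → A}

/-- `A` is the abelian group generated by the edges contained in `V` subject to the relations that
make `g` a Johnson weight. The universe of the test groups is the one of the vertices, because this
is where `ReducedGroup` lives. -/
structure IsUniversalJohnsonWeight (V : Finset α) (g : Finset α → A) : Prop where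
  isJohnsonWeight : IsJohnsonWeight V g
  closure_eq_top : AddSubgroup.closure (g '' V.powersetCard 2) = ⊤
  exists_hom : ∀ {B : Type u} [AddCommGroup B] {h : Finset α → B}, IsJohnsonWeight V h →
    ∃ φ : A →+ B, ∀ S ∈ V.powersetCard 2, φ (g S) = h S

theorem IsUniversalJohnsonWeight.injective (hb : b ∉ W) (ha : a ∉ insert b W)
    (hg : IsUniversalJohnsonWeight (insert a (insert b W)) g) {ψ : ReducedGroup W →+ A}
    (hψ : ((universal W).map ψ).AgreeOn (ofWeight a (insert b W) g) W) :
    Function.Injective ψ := by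
  obtain ⟨c, hc, hcW⟩ := isReduced_universal.exists_isJohnson_insert hb
  obtain ⟨h, hh⟩ := exists_represents ha c
  obtain ⟨φ, hφ⟩ := hg.exists_hom ((hh.isJohnsonWeight_iff ha hc.sum_spoke).2 hc)
  have hφc : ((ofWeight a (insert b W) g).map φ).AgreeOn c W := by
    rw [map_ofWeight]
    exact ((hh.congr ha hφ).agreeOn_ofWeight ha hc.sum_spoke).mono (subset_insert b W)
  have hφψ : φ.comp ψ = .id _ := hom_ext (((hψ.map φ).trans hφc).trans hcW)
  exact Function.LeftInverse.injective (DFunLike.congr_fun hφψ)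

theorem IsUniversalJohnsonWeight.surjective (hb : b ∉ W) (ha : a ∉ insert b W)
    (hg : IsUniversalJohnsonWeight (insert a (insert b W)) g) {ψ : ReducedGroup W →+ A}
    (hψ : ((universal W).map ψ).AgreeOn (ofWeight a (insert b W) g) W) :
    Function.Surjective ψ := by
  have hhub : (ofWeight a (insert b W) g).hub ∈ ψ.range := ⟨_, hψ.hub⟩
  obtain ⟨hspoke, hrim⟩ := (isJohnson_ofWeight ha hg.isJohnsonWeight).spoke_mem_and_rim_mem hb hhub
    (fun i hi => ⟨_, hψ.spoke i hi⟩) (fun S hS => ⟨_, hψ.rim S hS⟩)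
  rw [← AddMonoidHom.range_eq_top, eq_top_iff, ← hg.closure_eq_top, AddSubgroup.closure_le]
  rintro _ ⟨S, hS, rfl⟩
  exact (represents_ofWeight _ _ g).mem_of_coords_mem ha hhub hspoke hrim S hS

theorem IsUniversalJohnsonWeight.nonempty_addEquiv (hb : b ∉ W) (ha : a ∉ insert b W)
    (hg : IsUniversalJohnsonWeight (insert a (insert b W)) g) :
    Nonempty (A ≃+ ReducedGroup W) := by
  obtain ⟨ψ, hψ⟩ := ((isJohnson_ofWeight ha hg.isJohnsonWeight).isReduced hb).exists_hom
  exact ⟨(AddEquiv.ofBijective ψ ⟨hg.injective hb ha hψ, hg.surjective hb ha hψ⟩).symm⟩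

end UniversalJohnsonWeight

namespace SmithGroup

variable {ρ γ : Type*} [DecidableEq γ] {M : Matrix ρ γ ℤ}

/-- The class of the standard basis vector at the column `c`. -/
def gen (M : Matrix ρ γ ℤ) (c : γ) : SmithGroup M :=
  Submodule.Quotient.mk (Pi.single c 1)

theorem mk_eq_sum_smul_gen [Fintype γ] (x : γ → ℤ) :
    (Submodule.Quotient.mk x : SmithGroup M) = ∑ c, x c • gen M c := by
  conv_lhs => rw [pi_eq_sum_univ' x, ← Submodule.mkQ_apply, map_sum]
  exact sum_congr rfl fun c _ => map_zsmul ..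

theorem sum_smul_gen [Fintype γ] (r : ρ) : ∑ c, M r c • gen M c = 0 := by
  rw [← mk_eq_sum_smul_gen, Submodule.Quotient.mk_eq_zero]
  exact Submodule.subset_span ⟨r, rfl⟩

theorem closure_range_gen [Finite γ] : AddSubgroup.closure (Set.range (gen M)) = ⊤ := by
  cases nonempty_fintype γ
  refine eq_top_iff.2 fun x _ => ?_
  obtain ⟨x, rfl⟩ := Submodule.Quotient.mk_surjective _ x
  rw [mk_eq_sum_smul_gen]
  exact sum_mem fun c _ => zsmul_mem (AddSubgroup.subset_closure (Set.mem_range_self c)) _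

theorem exists_hom [Fintype γ] {A : Type*} [AddCommGroup A] {g : γ → A}
    (hg : ∀ r, ∑ c, M r c • g c = 0) :
    ∃ φ : SmithGroup M →+ A, ∀ c, φ (gen M c) = g c := by
  have hker : Submodule.span ℤ (Set.range fun r => M r) ≤
      LinearMap.ker (Fintype.linearCombination ℤ g) := by
    rw [Submodule.span_le]
    rintro _ ⟨r, rfl⟩
    exact hg r
  refine ⟨(Submodule.liftQ _ _ hker).toAddMonoidHom, fun c => ?_⟩
  exact (Fintype.linearCombination_apply_single ℤ g c 1).trans (one_smul ℤ (g c))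

end SmithGroup

section Johnson

variable {A : Type*} [AddCommGroup A] {n : ℕ}

theorem ksubsets_eq_powersetCard (n k : ℕ) : ksubsets n k = (Icc 1 n).powersetCard k :=
  powersetCard_eq_filter.symm

theorem isJohnsonWeight_iff_interMat {g : Finset ℕ → A} :
    IsJohnsonWeight (Icc 1 n) g ↔ ∀ S, ∑ T, interMat n 2 2 1 S T • g T = 0 := by
  rw [isJohnsonWeight_iff, ← ksubsets_eq_powersetCard, Subtype.forall]
  refine forall₂_congr fun S hS => ?_
  rw [← sum_coe_sort]
  rfl

/-- The edge classes in the Smith group of `J(n,2)`, extended by `0` to all finite sets. -/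
noncomputable def edgeClass (n : ℕ) : Finset ℕ → SmithGroup (interMat n 2 2 1) :=
  Function.extend Subtype.val (SmithGroup.gen (interMat n 2 2 1)) 0

theorem edgeClass_coe (S : ↥(ksubsets n 2)) : edgeClass n S = SmithGroup.gen _ S :=
  Subtype.val_injective.extend_apply _ _ S

theorem isUniversalJohnsonWeight_edgeClass (n : ℕ) :
    IsUniversalJohnsonWeight (Icc 1 n) (edgeClass n) where
  isJohnsonWeight := isJohnsonWeight_iff_interMat.2 fun S => by
    simp only [edgeClass_coe, SmithGroup.sum_smul_gen]
  closure_eq_top := by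
    rw [← SmithGroup.closure_range_gen, ← ksubsets_eq_powersetCard, Set.image_eq_range]
    exact congrArg (fun f => AddSubgroup.closure (Set.range f)) (funext edgeClass_coe)
  exists_hom hh := by
    obtain ⟨φ, hφ⟩ := SmithGroup.exists_hom (isJohnsonWeight_iff_interMat.1 hh)
    refine ⟨φ, fun S hS => ?_⟩
    rw [← ksubsets_eq_powersetCard] at hS
    rw [edgeClass_coe ⟨S, hS⟩, hφ]

theorem Icc_one_eq_insert_insert (hn : 2 ≤ n) : Icc 1 n = insert 1 (insert 2 (Icc 3 n)) := by
  ext i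
  simp only [mem_insert, mem_Icc]
  omega

end Johnson

/-- Only `n = 3` needs the absolute value; for `n = 2` and `n = 4` the free part of the Smith group
appears as copies of `ZMod 0 = ℤ`. -/
theorem statement16_general (n : ℕ) (hn : 2 ≤ n) :
    Nonempty (SmithGroup (interMat n 2 2 1) ≃+
      ((Fin ((n - 2) * (n - 3) / 2) → ZMod 2) ×
        ZMod ((n - 2) * (n - 4 : ℤ).natAbs) ×
        (Fin (n - 2) → ZMod (2 * (n - 4 : ℤ).natAbs)))) := by
  have huniv := isUniversalJohnsonWeight_edgeClass n
  rw [Icc_one_eq_insert_insert hn] at huniv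
  obtain ⟨e⟩ := huniv.nonempty_addEquiv (by simp) (by simp)
  have hcard : #(Icc 3 n) = n - 2 := by simp
  obtain ⟨e'⟩ := WheelCoords.ReducedGroup.nonempty_addEquiv_fin hcard
  have hsub : ((n - 2 : ℕ) - 2 : ℤ) = n - 4 := by omega
  rw [Nat.choose_two_right, Nat.sub_sub, hsub, Int.natAbs_mul, Int.natAbs_natCast,
    Int.natAbs_mul] at e'
  exact ⟨e.trans e'⟩

/-- `S(A_{n,2,2,1}) ≅ (ℤ/2ℤ)^{(n−2)(n−3)/2} ⊕ ℤ/(n−2)(n−4)ℤ ⊕ (ℤ/2(n−4)ℤ)^{n−2}`. -/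
theorem statement16 (n : ℕ) (hn : 5 ≤ n) :
    Nonempty (SmithGroup (interMat n 2 2 1) ≃+
      ((Fin ((n - 2) * (n - 3) / 2) → ZMod 2) ×
        ZMod ((n - 2) * (n - 4)) ×
        (Fin (n - 2) → ZMod (2 * (n - 4))))) := by
  have habs : (n - 4 : ℤ).natAbs = n - 4 := by omega
  exact habs ▸ statement16_general n (by omega)
end
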